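/- Let ω be a symplectic form (a closed, nondegenerate smooth 2-form) on a neighborhood of 0 in ℝ⁴ such that: (a) ω − ω₀ has all coefficients flat at the origin; (b) the regular level sets of q = (q₁,q₂) are Lagrangian for ω, i.e. ω(X⁰_{q₁}, X⁰_{q₂}) = 0 where X⁰_{qᵢ} are the Hamiltonian vector fields of q₁,q₂ for ω₀; (c) for every z = (z₁,z₂) near 0 (identifying ℝ⁴ with ℂ²), ∫_{D_z} (ω − ω₀) = 0, where D_z = {(ζz₁,ζz₂) : ζ ∈ ℂ, |ζ| ≤ 1}, i.e. the integral over the closed unit disc of the pullback of ω − ω₀ by ζ ↦ (ζz₁,ζz₂) vanishes. Then there exist a local diffeomorphism Φ of (ℝ⁴,0) and a local diffeomorphism U = (U₁,U₂) of (ℝ²,0), both with difference from the identity flat at the origin, such that Φ*ω = ω₀, q₁∘Φ = U₁∘(q₁,q₂), and q₂∘Φ = U₂∘(q₁,q₂) near the origin. -/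

import Mathlib

open Filter Topology Set MeasureTheory

noncomputable section

/-- ℝ⁴ with coordinates `(x₁, ξ₁, x₂, ξ₂) = (p 0, p 1, p 2, p 3)`,
identified with ℂ² via `z₁ = x₁ + ix₂`, `z₂ = ξ₁ + iξ₂`. -/
abbrev E4 : Type := Fin 4 → ℝ

/-- ℝ². -/
abbrev E2 : Type := Fin 2 → ℝ

/-- The focus-focus quadratic form `q₁ = x₁ξ₁ + x₂ξ₂`. -/
def q1 (p : E4) : ℝ := p 0 * p 1 + p 2 * p 3

/-- The focus-focus quadratic form `q₂ = x₁ξ₂ − x₂ξ₁`. -/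
def q2 (p : E4) : ℝ := p 0 * p 3 - p 2 * p 1

/-- The map `q = (q₁, q₂) : ℝ⁴ → ℝ²`. -/
def qmap (p : E4) : E2 := ![q1 p, q2 p]

/-- The canonical symplectic form `ω₀ = dξ₁∧dx₁ + dξ₂∧dx₂` as a bilinear form on ℝ⁴. -/
def omega0 (u v : E4) : ℝ := u 1 * v 0 - u 0 * v 1 + u 3 * v 2 - u 2 * v 3

/-- The Hamiltonian vector field of `q₁` for `ω₀`:
`X⁰_{q₁} = (∂q₁/∂ξ₁, −∂q₁/∂x₁, ∂q₁/∂ξ₂, −∂q₁/∂x₂) = (x₁, −ξ₁, x₂, −ξ₂)`. -/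
def X01 (p : E4) : E4 := ![p 0, -(p 1), p 2, -(p 3)]

/-- The Hamiltonian vector field of `q₂` for `ω₀`:
`X⁰_{q₂} = (∂q₂/∂ξ₁, −∂q₂/∂x₁, ∂q₂/∂ξ₂, −∂q₂/∂x₂) = (−x₂, −ξ₂, x₁, ξ₁)`. -/
def X02 (p : E4) : E4 := ![-(p 2), -(p 3), p 0, p 1]

/-- A map is flat at a point if all its iterated derivatives vanish there. -/
def flatAt {E F : Type*} [NormedAddCommGroup E] [NormedSpace ℝ E]
    [NormedAddCommGroup F] [NormedSpace ℝ F] (f : E → F) (x : E) : Prop :=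
  ∀ n : ℕ, iteratedFDeriv ℝ n f x = 0

/-- The map `j_z : ℂ → ℂ² ≅ ℝ⁴`, `ζ ↦ (ζz₁, ζz₂)`, parametrizing the disc `D_z`. -/
def discMap (p : E4) (ζ : ℂ) : E4 :=
  ![ζ.re * p 0 - ζ.im * p 2,
    ζ.re * p 1 - ζ.im * p 3,
    ζ.re * p 2 + ζ.im * p 0,
    ζ.re * p 3 + ζ.im * p 1]

/-- The image of `p` under multiplication by `i` on ℂ² ≅ ℝ⁴; together with `p` itself,
these are the two partial derivatives `∂j_z/∂(Re ζ) = z` and `∂j_z/∂(Im ζ) = iz` of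
`j_z`, so that the pullback to the unit disc of a `2`-form `ω` under `j_z` is
`ω_{j_z(ζ)}(z, iz)·dRe ζ∧dIm ζ`. -/
def Jmul (p : E4) : E4 := ![-(p 2), -(p 3), p 0, p 1]

/-!
The form `ω - ω₀` has a flat primitive by the Poincaré lemma. Subtracting flat exact forms, it can
be made to vanish on both Hamiltonian fields `X₁`, `X₂`. For the hyperbolic field `X₁` the
equation `X₁ f = h` is solved by integrating `h` along the flow, forwards on a cone around the
contracted plane and backwards on a cone around the expanded one. The flow of `X₂` is a circle
action, so `X₂ f = g` requires `g` to have zero mean on circles; by Stokes this is the condition on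
the discs `D_z`, and the Lagrangian condition makes `g` invariant under `X₁`, so that the first
normalization survives the second. The resulting primitive is `η = a ω₀(X₁, ·) + b ω₀(X₂, ·)` with
flat `a` and `b`, and `Ψ p = exp (a p • X₁) (exp (b p • X₂) p)` preserves `q` and satisfies
`Ψ*ω₀ = ω₀ + dη = ω`. Hence `Φ = Ψ⁻¹`, and one may take `U = id`.
-/

section SmoothAnalysis

open scoped ContDiff
open Asymptotics

section Flat

variable {D E F G : Type*} [NormedAddCommGroup D] [NormedSpace ℝ D]
  [NormedAddCommGroup E] [NormedSpace ℝ E] [NormedAddCommGroup F] [NormedSpace ℝ F]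
  [NormedAddCommGroup G] [NormedSpace ℝ G] {f : E → F} {x : E}

theorem flatAt_iff_fderiv : flatAt f x ↔ f x = 0 ∧ flatAt (fderiv ℝ f) x := by
  have hzero : iteratedFDeriv ℝ 0 f x = 0 ↔ f x = 0 := by
    rw [← norm_eq_zero, norm_iteratedFDeriv_zero, norm_eq_zero]
  have hsucc (n : ℕ) : iteratedFDeriv ℝ (n + 1) f x = 0 ↔
      iteratedFDeriv ℝ n (fderiv ℝ f) x = 0 := by
    rw [← norm_eq_zero, ← norm_iteratedFDeriv_fderiv, norm_eq_zero]
  refine ⟨fun h => ⟨hzero.1 (h 0), fun n => (hsucc n).1 (h (n + 1))⟩, fun h n => ?_⟩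
  cases n with
  | zero => exact hzero.2 h.1
  | succ n => exact (hsucc n).2 (h.2 n)

namespace flatAt

theorem apply_eq_zero (h : flatAt f x) : f x = 0 := (flatAt_iff_fderiv.1 h).1

protected theorem fderiv (h : flatAt f x) : flatAt (fderiv ℝ f) x := (flatAt_iff_fderiv.1 h).2

protected theorem congr {g : E → F} (h : flatAt f x) (hgf : g =ᶠ[𝓝 x] f) : flatAt g x :=
  fun n => (hgf.iteratedFDeriv ℝ n).eq_of_nhds.trans (h n)

protected theorem add {g : E → F} (hf : flatAt f x) (hg : flatAt g x) (hfs : ContDiffAt ℝ ∞ f x)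
    (hgs : ContDiffAt ℝ ∞ g x) : flatAt (fun y => f y + g y) x := fun n => by
  rw [fun_iteratedFDeriv_add_apply (hfs.of_le (mod_cast le_top)) (hgs.of_le (mod_cast le_top)),
    hf n, hg n, add_zero]

theorem clm_comp (L : F →L[ℝ] G) (h : flatAt f x) (hf : ContDiffAt ℝ ∞ f x) :
    flatAt (fun y => L (f y)) x := fun n => by
  rw [show (fun y => L (f y)) = L ∘ f from rfl,
    L.iteratedFDeriv_comp_left hf (mod_cast le_top), h n]
  ext
  simp

theorem bilin (B : D →L[ℝ] F →L[ℝ] G) {c : E → D} (hc : ContDiff ℝ ∞ c) (hf : ContDiff ℝ ∞ f)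
    (h : flatAt f x) : flatAt (fun y => B (c y) (f y)) x := fun n => by
  have hle := B.norm_iteratedFDeriv_le_of_bilinear hc hf x (n := n) (mod_cast le_top)
  simpa [h _] using hle

protected theorem comp {g : F → G} {a : E → F} (h : flatAt g (a x)) (hg : ContDiff ℝ ∞ g)
    (ha : ContDiffAt ℝ ∞ a x) : flatAt (fun y => g (a y)) x := fun n => by
  obtain ⟨u, hu, hau⟩ := ha.contDiffOn (m := n) (mod_cast le_top) (by simp)
  obtain ⟨s, hsu, hs, hxs⟩ := mem_nhds_iff.1 (by simpa using hu)
  obtain ⟨C, hC⟩ := ((Finset.range (n + 1)).image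
    fun i => ‖iteratedFDerivWithin ℝ i a s x‖).bddAbove
  have hderiv (i : ℕ) (hi : 1 ≤ i) (hin : i ≤ n) :
      ‖iteratedFDerivWithin ℝ i a s x‖ ≤ (max C 1) ^ i := by
    have hiC : ‖iteratedFDerivWithin ℝ i a s x‖ ≤ C :=
      hC (Finset.mem_coe.2 (Finset.mem_image_of_mem _ (Finset.mem_range_succ_iff.2 hin)))
    exact (hiC.trans (le_max_left C 1)).trans
      (le_self_pow₀ (le_max_right C 1) (Nat.one_le_iff_ne_zero.1 hi))
  have hle := norm_iteratedFDerivWithin_comp_le (hg.of_le (mod_cast le_top)).contDiffOn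
    (hau.mono hsu) le_rfl uniqueDiffOn_univ hs.uniqueDiffOn (mapsTo_univ a s) hxs
    (C := 0) (by simp [iteratedFDerivWithin_univ, h _]) hderiv
  rw [iteratedFDerivWithin_of_isOpen n hs hxs] at hle
  simpa [Function.comp_def] using hle

end flatAt

theorem flatAt_of_forall_apply {f : E → F →L[ℝ] G} (hf : ContDiffAt ℝ ∞ f x)
    (h : ∀ v, flatAt (fun y => f y v) x) : flatAt f x := fun n => by
  ext m v
  have hv := (ContinuousLinearMap.apply ℝ G v).iteratedFDeriv_comp_left (i := n) hf
    (mod_cast le_top)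
  exact (DFunLike.congr_fun (hv.symm.trans (h v n)) m)

theorem flatAt_zero : flatAt (fun _ : E => (0 : F)) x := fun n => by
  simp

end Flat

section FlatBound

universe u
variable {E F : Type u} [NormedAddCommGroup E] [NormedSpace ℝ E] [NormedAddCommGroup F]
  [NormedSpace ℝ F]

theorem flatAt.isBigO {f : E → F} {x : E} (h : flatAt f x) (hf : ContDiffAt ℝ ∞ f x) (n : ℕ) :
    f =O[𝓝 x] fun y => ‖y - x‖ ^ n := by
  induction n generalizing F with
  | zero => simpa using hf.continuousAt.isBigO_one ℝ
  | succ n ih =>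
    obtain ⟨C, hC, hbound⟩ := (ih h.fderiv (hf.fderiv_right (by simp))).exists_pos
    have hdiff : ∀ᶠ y in 𝓝 x, DifferentiableAt ℝ f y :=
      ((hf.of_le (by simp : (1 : WithTop ℕ∞) ≤ ∞)).eventually (by simp)).mono
        fun y hy => hy.differentiableAt (by simp)
    obtain ⟨r, hr, hball⟩ := Metric.eventually_nhds_iff_ball.1 (hdiff.and hbound.bound)
    refine IsBigO.of_bound C ?_
    filter_upwards [Metric.ball_mem_nhds x hr] with y hy
    have hsub : Metric.closedBall x ‖y - x‖ ⊆ Metric.ball x r :=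
      Metric.closedBall_subset_ball (by simpa [dist_eq_norm] using hy)
    have hderiv (z : E) (hz : z ∈ Metric.closedBall x ‖y - x‖) :
        ‖fderiv ℝ f z‖ ≤ C * ‖y - x‖ ^ n := by
      have hz' := (hball z (hsub hz)).2
      rw [norm_pow, norm_norm] at hz'
      rw [Metric.mem_closedBall, dist_eq_norm] at hz
      exact hz'.trans (by gcongr)
    have hmv := (convex_closedBall x ‖y - x‖).norm_image_sub_le_of_norm_fderiv_le
      (fun z hz => (hball z (hsub hz)).1) hderiv (Metric.mem_closedBall_self (norm_nonneg _))
      (by simp [dist_eq_norm] : y ∈ Metric.closedBall x ‖y - x‖)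
    simpa [h.apply_eq_zero, pow_succ, mul_assoc] using hmv

end FlatBound

/-- A globally defined smooth map which is flat at the origin. Working with global maps costs
nothing, since every smooth germ has a global representative (`exists_contDiff_eventuallyEq`). -/
structure IsFlat {E F : Type*} [NormedAddCommGroup E] [NormedSpace ℝ E]
    [NormedAddCommGroup F] [NormedSpace ℝ F] (f : E → F) : Prop where
  contDiff : ContDiff ℝ ∞ f
  flatAt : flatAt f 0

namespace IsFlat

variable {D E F G : Type*} [NormedAddCommGroup D] [NormedSpace ℝ D]
  [NormedAddCommGroup E] [NormedSpace ℝ E] [NormedAddCommGroup F] [NormedSpace ℝ F]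
  [NormedAddCommGroup G] [NormedSpace ℝ G] {f g : E → F}

theorem map_zero (hf : IsFlat f) : f 0 = 0 := hf.flatAt.apply_eq_zero

theorem differentiable (hf : IsFlat f) : Differentiable ℝ f := hf.contDiff.differentiable (by simp)

protected theorem fderiv (hf : IsFlat f) : IsFlat (fderiv ℝ f) :=
  ⟨hf.contDiff.fderiv_right (by simp), hf.flatAt.fderiv⟩

protected theorem add (hf : IsFlat f) (hg : IsFlat g) : IsFlat fun x => f x + g x :=
  ⟨hf.contDiff.add hg.contDiff,
    hf.flatAt.add hg.flatAt hf.contDiff.contDiffAt hg.contDiff.contDiffAt⟩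

theorem clm_comp (L : F →L[ℝ] G) (hf : IsFlat f) : IsFlat fun x => L (f x) :=
  ⟨L.contDiff.comp hf.contDiff, hf.flatAt.clm_comp L hf.contDiff.contDiffAt⟩

protected theorem neg (hf : IsFlat f) : IsFlat fun x => -f x :=
  hf.clm_comp (-ContinuousLinearMap.id ℝ F)

protected theorem sub (hf : IsFlat f) (hg : IsFlat g) : IsFlat fun x => f x - g x := by
  simpa only [sub_eq_add_neg] using hf.add hg.neg

theorem bilin (B : D →L[ℝ] F →L[ℝ] G) {c : E → D} (hc : ContDiff ℝ ∞ c) (hf : IsFlat f) :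
    IsFlat fun x => B (c x) (f x) :=
  ⟨(B.contDiff.comp hc).clm_apply hf.contDiff, hf.flatAt.bilin B hc hf.contDiff⟩

theorem clm_apply {f : E → F →L[ℝ] G} (hf : IsFlat f) {c : E → F} (hc : ContDiff ℝ ∞ c) :
    IsFlat fun x => f x (c x) :=
  hf.bilin (ContinuousLinearMap.apply ℝ G) hc

theorem comp {a : D → E} (hf : IsFlat f) (ha : ContDiff ℝ ∞ a) (ha0 : a 0 = 0) :
    IsFlat fun x => f (a x) :=
  ⟨hf.contDiff.comp ha, (ha0.symm ▸ hf.flatAt).comp hf.contDiff ha.contDiffAt⟩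

end IsFlat

theorem exists_contDiff_eventuallyEq {E F : Type*} [NormedAddCommGroup E] [NormedSpace ℝ E]
    [HasContDiffBump E] [NormedAddCommGroup F] [NormedSpace ℝ F] {f : E → F} {x : E} {s : Set E}
    (hs : IsOpen s) (hx : x ∈ s) (hf : ContDiffOn ℝ ∞ f s) :
    ∃ g : E → F, ContDiff ℝ ∞ g ∧ g =ᶠ[𝓝 x] f := by
  obtain ⟨r, hr, hrs⟩ := Metric.isOpen_iff.1 hs x hx
  let χ : ContDiffBump x := ⟨r / 3, r / 2, by positivity, by linarith⟩
  have hsupp : tsupport (fun y => χ y • f y) ⊆ s :=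
    (closure_mono (Function.support_smul_subset_left χ f)).trans <|
      χ.tsupport_eq.trans_subset <|
        (Metric.closedBall_subset_ball (show r / 2 < r by linarith)).trans hrs
  refine ⟨fun y => χ y • f y, contDiff_iff_contDiffAt.2 fun y => ?_, ?_⟩
  · by_cases hy : y ∈ s
    · exact χ.contDiffAt.smul (hf.contDiffAt (hs.mem_nhds hy))
    · exact contDiffAt_const.congr_of_eventuallyEq
        (notMem_tsupport_iff_eventuallyEq.1 fun h => hy (hsupp h))
  · filter_upwards [χ.eventuallyEq_one] with y hy
    rw [hy, Pi.one_apply, one_smul]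

theorem fderiv_apply_apply {E F G G' : Type*} [NormedAddCommGroup E] [NormedSpace ℝ E]
    [NormedAddCommGroup F] [NormedSpace ℝ F] [NormedAddCommGroup G] [NormedSpace ℝ G]
    [NormedAddCommGroup G'] [NormedSpace ℝ G'] {σ : E → F →L[ℝ] G →L[ℝ] G'} {p : E}
    (hσ : DifferentiableAt ℝ σ p) (u : E) (v : F) (w : G) :
    fderiv ℝ (fun x => σ x v w) p u = fderiv ℝ σ p u v w := by
  rw [((hσ.hasFDerivAt.clm_apply (hasFDerivAt_const v p)).clm_apply
    (hasFDerivAt_const w p)).fderiv]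
  simp

section ParametricIntegral

variable {H F : Type*} [NormedAddCommGroup H] [NormedSpace ℝ H]
  [NormedAddCommGroup F] [NormedSpace ℝ F]

theorem hasFDerivAt_intervalIntegral_of_contDiff {f : ℝ × H → F} (hf : ContDiff ℝ 1 f) (a b : ℝ)
    (x₀ : H) : HasFDerivAt (fun x => ∫ t in a..b, f (t, x))
      (∫ t in a..b, (fderiv ℝ f (t, x₀)).comp (ContinuousLinearMap.inr ℝ ℝ H)) x₀ := by
  have hcont : Continuous fun y : ℝ × H =>
      (fderiv ℝ f y).comp (ContinuousLinearMap.inr ℝ ℝ H) :=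
    (hf.continuous_fderiv (by simp)).clm_comp continuous_const
  obtain ⟨C, hC⟩ := (isCompact_uIcc (a := a) (b := b)).exists_bound_of_continuousOn
    (hcont.comp (Continuous.prodMk_left x₀)).continuousOn
  obtain ⟨u, v, -, hv, hau, hxv, huv⟩ := generalized_tube_lemma isCompact_uIcc
    (isCompact_singleton (x := x₀)) (isOpen_lt hcont.norm (continuous_const (y := C + 1)))
    (fun y hy => by
      obtain ⟨t, x⟩ := y
      obtain ⟨ht, rfl⟩ := hy
      exact (hC t ht).trans_lt (lt_add_one C))
  have := secondCountableTopologyEither_of_left ℝ (H →L[ℝ] F)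
  refine intervalIntegral.hasFDerivAt_integral_of_dominated_of_fderiv_le
    (F := fun x t => f (t, x))
    (F' := fun x t => (fderiv ℝ f (t, x)).comp (ContinuousLinearMap.inr ℝ ℝ H))
    (bound := fun _ => C + 1) (hv.mem_nhds (hxv rfl)) ?_ ?_ ?_ ?_ ?_ ?_
  · exact .of_forall fun x =>
      (hf.continuous.comp (Continuous.prodMk_left x)).aestronglyMeasurable
  · exact (hf.continuous.comp (Continuous.prodMk_left x₀)).intervalIntegrable _ _
  · exact (hcont.comp (Continuous.prodMk_left x₀)).aestronglyMeasurable
  · exact .of_forall fun t ht x hx => (huv ⟨hau (uIoc_subset_uIcc ht), hx⟩).le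
  · exact intervalIntegrable_const
  · exact .of_forall fun t _ x _ => ((hf.differentiable (by simp)) (t, x)).hasFDerivAt.comp x
      (hasFDerivAt_prodMk_right t x)

end ParametricIntegral

section SmoothParametricIntegral

universe u
variable {H F : Type u} [NormedAddCommGroup H] [NormedSpace ℝ H] [NormedAddCommGroup F]
  [NormedSpace ℝ F]

theorem contDiff_intervalIntegral {f : ℝ × H → F} (hf : ContDiff ℝ ∞ f) (a b : ℝ) :
    ContDiff ℝ ∞ fun x => ∫ t in a..b, f (t, x) := by
  refine contDiff_infty.2 fun n => ?_
  induction n generalizing F with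
  | zero =>
    exact contDiff_zero.2 (continuous_iff_continuousAt.2 fun x =>
      (hasFDerivAt_intervalIntegral_of_contDiff (hf.of_le (by simp)) a b x).continuousAt)
  | succ n ih =>
    refine contDiff_succ_iff_hasFDerivAt.2 ⟨_, ?_, fun x =>
      hasFDerivAt_intervalIntegral_of_contDiff (hf.of_le (by simp)) a b x⟩
    exact ih ((hf.fderiv_right (by simp)).clm_comp contDiff_const)

theorem IsFlat.intervalIntegral {f : ℝ × H → F} (hf : ContDiff ℝ ∞ f)
    (hflat : ∀ t, _root_.flatAt f (t, 0)) (a b : ℝ) : IsFlat fun x => ∫ t in a..b, f (t, x) := by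
  refine ⟨contDiff_intervalIntegral hf a b, fun n => ?_⟩
  induction n generalizing F with
  | zero =>
    rw [← norm_eq_zero, norm_iteratedFDeriv_zero, norm_eq_zero]
    simp [(hflat _).apply_eq_zero]
  | succ n ih =>
    have hf' : ContDiff ℝ ∞ (fderiv ℝ f) := hf.fderiv_right (by simp)
    rw [← norm_eq_zero, ← norm_iteratedFDeriv_fderiv, norm_eq_zero,
      funext fun x => (hasFDerivAt_intervalIntegral_of_contDiff (hf.of_le (by simp)) a b x).fderiv]
    exact ih (hf'.clm_comp contDiff_const) fun t => (hflat t).fderiv.clm_comp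
      ((ContinuousLinearMap.compL ℝ H (ℝ × H) F).flip (ContinuousLinearMap.inr ℝ ℝ H))
      hf'.contDiffAt

end SmoothParametricIntegral

section HomogeneousMultiplier

/-- A map which is smooth away from the origin and positively homogeneous of degree `-k` there.
Multiplying a flat map by such a map, whatever its value at the origin, gives a flat map
(`IsHomogeneousNeg.isFlat_bilin`). -/
structure IsHomogeneousNeg {E F : Type*} [NormedAddCommGroup E] [NormedSpace ℝ E]
    [NormedAddCommGroup F] [NormedSpace ℝ F] (k : ℕ) (c : E → F) : Prop where
  contDiffOn : ContDiffOn ℝ ∞ c {0}ᶜ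
  map_smul : ∀ t : ℝ, 0 < t → ∀ x, c (t • x) = (t ^ k)⁻¹ • c x

namespace IsHomogeneousNeg

section
variable {E F : Type*} [NormedAddCommGroup E] [NormedSpace ℝ E] [NormedAddCommGroup F]
  [NormedSpace ℝ F] {k : ℕ} {c : E → F}

theorem contDiffAt (hc : IsHomogeneousNeg k c) {x : E} (hx : x ≠ 0) : ContDiffAt ℝ ∞ c x :=
  hc.contDiffOn.contDiffAt (isOpen_compl_singleton.mem_nhds hx)

protected theorem fderiv (hc : IsHomogeneousNeg k c) : IsHomogeneousNeg (k + 1) (fderiv ℝ c) where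
  contDiffOn := hc.contDiffOn.fderiv_of_isOpen isOpen_compl_singleton (by simp)
  map_smul t ht x := by
    have hscale : (fun y => c (t • y)) = (t ^ k)⁻¹ • c := funext (hc.map_smul t ht)
    have hderiv := congrArg (fderiv ℝ · x) hscale
    simp only [fderiv_comp_smul, fderiv_const_smul_field] at hderiv
    rw [Pi.smul_apply] at hderiv
    rw [pow_succ', mul_inv, mul_smul, ← hderiv, inv_smul_smul₀ ht.ne']

theorem exists_norm_le [ProperSpace E] (hc : IsHomogeneousNeg k c) :
    ∃ C ≥ 0, ∀ x ≠ 0, ‖c x‖ ≤ C * (‖x‖ ^ k)⁻¹ := by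
  obtain ⟨C, hC⟩ := (isCompact_sphere (0 : E) 1).exists_bound_of_continuousOn
    (hc.contDiffOn.continuousOn.mono fun x hx => ne_zero_of_mem_unit_sphere ⟨x, hx⟩)
  refine ⟨|C|, abs_nonneg C, fun x hx => ?_⟩
  have hunit : ‖x‖⁻¹ • x ∈ Metric.sphere (0 : E) 1 := by simp [norm_smul, hx]
  calc ‖c x‖ = ‖c (‖x‖ • ‖x‖⁻¹ • x)‖ := by rw [smul_inv_smul₀ (norm_ne_zero_iff.2 hx)]
    _ = (‖x‖ ^ k)⁻¹ * ‖c (‖x‖⁻¹ • x)‖ := by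
      rw [hc.map_smul _ (norm_pos_iff.2 hx), norm_smul, norm_inv, norm_pow, norm_norm]
    _ ≤ |C| * (‖x‖ ^ k)⁻¹ := by
      rw [mul_comm]
      gcongr
      exact (hC _ hunit).trans (le_abs_self C)

end

universe u
variable {E F G F' : Type u} [NormedAddCommGroup E] [NormedSpace ℝ E] [ProperSpace E]
  [NormedAddCommGroup F] [NormedSpace ℝ F] [NormedAddCommGroup G] [NormedSpace ℝ G]
  [NormedAddCommGroup F'] [NormedSpace ℝ F']
  (B : G →L[ℝ] F →L[ℝ] F') {k : ℕ} {c : E → G} {g : E → F}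

theorem isBigO_bilin (hc : IsHomogeneousNeg k c) (hg : IsFlat g) (n : ℕ) :
    (fun x => B (c x) (g x)) =O[𝓝 0] fun x => ‖x - 0‖ ^ n := by
  obtain ⟨C, hC0, hC⟩ := hc.exists_norm_le
  obtain ⟨C', hC'pos, hC'⟩ := (hg.flatAt.isBigO hg.contDiff.contDiffAt (n + k)).exists_pos
  refine .of_bound (‖B‖ * C * C') (hC'.bound.mono fun x hx => ?_)
  rw [sub_zero, norm_pow, norm_norm] at hx ⊢
  rcases eq_or_ne x 0 with rfl | hx0
  · rw [hg.map_zero, _root_.map_zero, norm_zero]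
    positivity
  have hk : ‖x‖ ^ k ≠ 0 := pow_ne_zero k (norm_ne_zero_iff.2 hx0)
  calc ‖B (c x) (g x)‖ ≤ ‖B‖ * ‖c x‖ * ‖g x‖ := B.le_opNorm₂ _ _
    _ ≤ ‖B‖ * (C * (‖x‖ ^ k)⁻¹) * (C' * ‖x‖ ^ (n + k)) := by gcongr; exact hC x hx0
    _ = ‖B‖ * C * C' * ‖x‖ ^ n * ((‖x‖ ^ k)⁻¹ * ‖x‖ ^ k) := by ring
    _ = ‖B‖ * C * C' * ‖x‖ ^ n := by rw [inv_mul_cancel₀ hk, mul_one]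

theorem hasFDerivAt_bilin (hc : IsHomogeneousNeg k c) (hg : IsFlat g) (x : E) :
    HasFDerivAt (fun x => B (c x) (g x))
      (B.precompR E (c x) (fderiv ℝ g x) + B.precompL E (fderiv ℝ c x) (g x)) x := by
  rcases eq_or_ne x 0 with rfl | hx
  · rw [hg.fderiv.map_zero, hg.map_zero, _root_.map_zero, _root_.map_zero, add_zero]
    exact (hc.isBigO_bilin B hg 2).hasFDerivAt one_lt_two
  · exact B.hasFDerivAt_of_bilinear ((hc.contDiffAt hx).differentiableAt (by simp)).hasFDerivAt
      (hg.differentiable x).hasFDerivAt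

theorem contDiff_bilin (hc : IsHomogeneousNeg k c) (hg : IsFlat g) :
    ContDiff ℝ ∞ fun x => B (c x) (g x) := by
  refine contDiff_infty.2 fun n => ?_
  induction n generalizing F G F' k c g with
  | zero =>
    exact contDiff_zero.2 (continuous_iff_continuousAt.2 fun x =>
      (hc.hasFDerivAt_bilin B hg x).continuousAt)
  | succ n ih =>
    exact contDiff_succ_iff_hasFDerivAt.2
      ⟨_, (ih _ hc hg.fderiv).add (ih _ hc.fderiv hg), hc.hasFDerivAt_bilin B hg⟩

theorem isFlat_bilin (hc : IsHomogeneousNeg k c) (hg : IsFlat g) :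
    IsFlat fun x => B (c x) (g x) := by
  refine ⟨hc.contDiff_bilin B hg, fun n => ?_⟩
  induction n generalizing F G F' k c g with
  | zero =>
    rw [← norm_eq_zero, norm_iteratedFDeriv_zero, hg.map_zero, _root_.map_zero, norm_zero]
  | succ n ih =>
    rw [← norm_eq_zero, ← norm_iteratedFDeriv_fderiv,
      funext fun x => (hc.hasFDerivAt_bilin B hg x).fderiv, norm_eq_zero,
      fun_iteratedFDeriv_add_apply
        ((hc.contDiff_bilin _ hg.fderiv).contDiffAt.of_le (mod_cast le_top))
        ((hc.fderiv.contDiff_bilin _ hg).contDiffAt.of_le (mod_cast le_top)),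
      ih _ hc hg.fderiv, ih _ hc.fderiv hg, add_zero]

end IsHomogeneousNeg

end HomogeneousMultiplier

section HyperbolicField

/-- The flow of the linear field `P - (1 - P)` attached to an idempotent `P`, in the
multiplicative time parameter `s = exp t`. -/
def hypScale {H : Type*} [NormedAddCommGroup H] [NormedSpace ℝ H] (P : H →L[ℝ] H) (s : ℝ) :
    H →L[ℝ] H :=
  s • P + s⁻¹ • (1 - P)

/-- A flat map supported in the cone `‖x‖ ≤ C * ‖P x‖` around the range of `P`. -/
structure IsFlatInCone {H F : Type*} [NormedAddCommGroup H] [NormedSpace ℝ H]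
    [NormedAddCommGroup F] [NormedSpace ℝ F] (P : H →L[ℝ] H) (C : ℝ) (h : H → F) : Prop
    extends IsFlat h where
  norm_le : ∀ x, h x ≠ 0 → ‖x‖ ≤ C * ‖P x‖

/-- The map `(s, x) ↦ s ^ m • h (hypScale P s x)`, extended by `0` to `s ≤ 0`. -/
def hypPullback {H F : Type*} [NormedAddCommGroup H] [NormedSpace ℝ H]
    [NormedAddCommGroup F] [NormedSpace ℝ F] (P : H →L[ℝ] H) (m : ℤ) (h : H → F) (z : ℝ × H) : F :=
  if 0 < z.1 then z.1 ^ m • h (hypScale P z.1 z.2) else 0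

section
variable {H F G : Type*} [NormedAddCommGroup H] [NormedSpace ℝ H] [NormedAddCommGroup F]
  [NormedSpace ℝ F] [NormedAddCommGroup G] [NormedSpace ℝ G] {P : H →L[ℝ] H} {C : ℝ} {h : H → F}

theorem hypScale_apply (s : ℝ) (x : H) : hypScale P s x = s • P x + s⁻¹ • (x - P x) := rfl

theorem hypScale_one : hypScale P 1 = 1 := by simp [hypScale]

theorem hypScale_mul (hP : IsIdempotentElem P) (s t : ℝ) :
    hypScale P (s * t) = hypScale P s * hypScale P t := by
  simp only [hypScale, mul_add, add_mul, smul_mul_assoc, mul_smul_comm, hP.eq,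
    hP.mul_one_sub_self, hP.one_sub_mul_self, hP.one_sub.eq, smul_zero, add_zero, zero_add,
    smul_smul, mul_inv]
  rw [mul_comm s t, mul_comm s⁻¹]

theorem apply_hypScale (hP : IsIdempotentElem P) (s : ℝ) (x : H) :
    P (hypScale P s x) = s • P x := by
  have hPP : P (P x) = P x := DFunLike.congr_fun hP.eq x
  simp [hypScale_apply, hPP]

theorem hasFDerivAt_hypScale (hP : IsIdempotentElem P) {s : ℝ} (hs : s ≠ 0) (x : H) :
    HasFDerivAt (fun z : ℝ × H => hypScale P z.1 z.2)
      ((ContinuousLinearMap.fst ℝ ℝ H).smulRight (s⁻¹ • (P - (1 - P)) (hypScale P s x)) +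
        hypScale P s ∘L ContinuousLinearMap.snd ℝ ℝ H) (s, x) := by
  have hscale : HasFDerivAt (fun z : ℝ × H => z.1⁻¹)
      (-(s ^ 2)⁻¹ • ContinuousLinearMap.fst ℝ ℝ H) (s, x) :=
    (hasDerivAt_inv hs).comp_hasFDerivAt (s, x) hasFDerivAt_fst
  have hfield : s⁻¹ • (P - (1 - P)) (hypScale P s x) = P x - (s ^ 2)⁻¹ • (x - P x) := by
    rw [sub_apply, sub_apply, one_apply_eq_self, apply_hypScale hP, hypScale_apply]
    match_scalars
    · field_simp
      ring
    · field_simp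
  refine ((hasFDerivAt_fst.smul (P.hasFDerivAt.comp (s, x) hasFDerivAt_snd)).add
    (hscale.smul ((1 - P).hasFDerivAt.comp (s, x) hasFDerivAt_snd))).congr_fderiv ?_
  ext w
  · rw [hfield]
    simp
    abel
  · simp [hypScale_apply]

namespace IsFlatInCone

theorem clm_comp (hh : IsFlatInCone P C h) (L : F →L[ℝ] G) :
    IsFlatInCone P C fun x => L (h x) :=
  ⟨hh.toIsFlat.clm_comp L, fun _ hx => hh.norm_le _ fun h0 => hx (by rw [h0, _root_.map_zero])⟩

theorem add {g : H → F} (hh : IsFlatInCone P C h) (hg : IsFlatInCone P C g) :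
    IsFlatInCone P C fun x => h x + g x :=
  ⟨hh.toIsFlat.add hg.toIsFlat, fun x hx => by
    by_cases h0 : h x = 0
    · exact hg.norm_le x fun g0 => hx (by rw [h0, g0, add_zero])
    · exact hh.norm_le x h0⟩

protected theorem fderiv (hh : IsFlatInCone P C h) : IsFlatInCone P C (fderiv ℝ h) where
  toIsFlat := hh.toIsFlat.fderiv
  norm_le _ hx :=
    closure_minimal (fun y hy => hh.norm_le y hy)
      (isClosed_le continuous_norm (continuous_const.mul P.continuous.norm))
      (support_fderiv_subset ℝ hx)

theorem clm_apply {h : H → F →L[ℝ] G} (hh : IsFlatInCone P C h) {c : H → F}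
    (hc : ContDiff ℝ ∞ c) : IsFlatInCone P C fun x => h x (c x) :=
  ⟨hh.toIsFlat.clm_apply hc, fun _ hx => hh.norm_le _ fun h0 => hx (by rw [h0]; rfl)⟩

end IsFlatInCone

theorem hypPullback_of_pos (m : ℤ) {s : ℝ} (hs : 0 < s) (x : H) :
    hypPullback P m h (s, x) = s ^ m • h (hypScale P s x) := if_pos hs

theorem hypPullback_of_nonpos (m : ℤ) {s : ℝ} (hs : s ≤ 0) (x : H) :
    hypPullback P m h (s, x) = 0 := if_neg hs.not_gt

theorem hypPullback_hypScale (hP : IsIdempotentElem P) {l : ℝ} (hl : 0 < l) (s : ℝ) (x : H) :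
    hypPullback P (-1) h (s, hypScale P l x) = l • hypPullback P (-1) h (s * l, x) := by
  rcases le_or_gt s 0 with hs | hs
  · rw [hypPullback_of_nonpos _ hs, hypPullback_of_nonpos _ (by nlinarith), smul_zero]
  · rw [hypPullback_of_pos _ hs, hypPullback_of_pos _ (mul_pos hs hl), hypScale_mul hP, smul_smul,
      mul_apply_eq_comp]
    congr 1
    field_simp

end

universe u
variable {H F : Type u} [NormedAddCommGroup H] [NormedSpace ℝ H] [NormedAddCommGroup F]
  [NormedSpace ℝ F] {P : H →L[ℝ] H} {C : ℝ} {h : H → F}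

theorem IsFlatInCone.norm_hypScale_le (hP : IsIdempotentElem P) (hh : IsFlatInCone P C h) {s : ℝ}
    (hs : 0 < s) {x : H} (h0 : h (hypScale P s x) ≠ 0) :
    ‖hypScale P s x‖ ≤ |C| * (‖P‖ * ‖x‖) * s :=
  calc ‖hypScale P s x‖ ≤ C * ‖P (hypScale P s x)‖ := hh.norm_le _ h0
    _ = C * (s * ‖P x‖) := by rw [apply_hypScale hP, norm_smul, Real.norm_of_nonneg hs.le]
    _ ≤ |C| * (s * (‖P‖ * ‖x‖)) := by
      gcongr
      · exact le_abs_self C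
      · exact P.le_opNorm x
    _ = |C| * (‖P‖ * ‖x‖) * s := by ring

theorem IsFlatInCone.hypPullback_isBigO (hP : IsIdempotentElem P) (hh : IsFlatInCone P C h) (m : ℤ)
    (x : H) : hypPullback P m h =O[𝓝 (0, x)] fun z => ‖z - (0, x)‖ ^ 2 := by
  let n := (-m).toNat + 2
  obtain ⟨K, hK0, hK⟩ := (hh.flatAt.isBigO hh.contDiff.contDiffAt n).exists_pos
  obtain ⟨r, hr, hball⟩ := Metric.eventually_nhds_iff_ball.1 hK.bound
  let M := |C| * (‖P‖ * (‖x‖ + 1))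
  have hnear : IsOpen {z : ℝ × H | z.1 < 1 ∧ M * z.1 < r ∧ ‖z.2‖ < ‖x‖ + 1} :=
    .and (isOpen_lt (by fun_prop) (by fun_prop)) <|
      .and (isOpen_lt (by fun_prop) (by fun_prop)) (isOpen_lt (by fun_prop) (by fun_prop))
  have hmem : (0, x) ∈ {z : ℝ × H | z.1 < 1 ∧ M * z.1 < r ∧ ‖z.2‖ < ‖x‖ + 1} :=
    ⟨one_pos, by rwa [mul_zero], lt_add_one _⟩
  refine .of_bound (K * M ^ n) ((hnear.eventually_mem hmem).mono ?_)
  rintro ⟨s, y⟩ ⟨hs1, hsr, hy⟩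
  have hsz : |s| ≤ ‖(s, y) - (0, x)‖ := by simp
  rw [norm_pow, norm_norm]
  by_cases h0 : hypPullback P m h (s, y) = 0
  · rw [h0, norm_zero]
    positivity
  have hs : 0 < s := not_le.1 fun hs => h0 (hypPullback_of_nonpos m hs y)
  rw [hypPullback_of_pos m hs] at h0 ⊢
  have hq : ‖hypScale P s y‖ ≤ M * s :=
    (hh.norm_hypScale_le hP hs (right_ne_zero_of_smul h0)).trans (by dsimp only [M]; gcongr)
  have hhq := hball _ (mem_ball_zero_iff.2 (hq.trans_lt hsr))
  rw [sub_zero, norm_pow, norm_norm] at hhq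
  calc ‖s ^ m • h (hypScale P s y)‖ = s ^ m * ‖h (hypScale P s y)‖ := by
        rw [norm_smul, Real.norm_of_nonneg (by positivity)]
    _ ≤ s ^ m * (K * (M * s) ^ n) := by gcongr; exact hhq.trans (by gcongr)
    _ = K * M ^ n * s ^ (m + n) := by
      rw [zpow_add₀ hs.ne', zpow_natCast, mul_pow]
      ring
    _ ≤ K * M ^ n * s ^ (2 : ℤ) := by
      have : (2 : ℤ) ≤ m + n := by omega
      gcongr ?_ * ?_
      exact zpow_le_zpow_right_of_le_one₀ hs hs1.le this
    _ ≤ K * M ^ n * ‖(s, y) - (0, x)‖ ^ 2 := by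
      rw [zpow_ofNat]
      gcongr
      exact (le_abs_self s).trans hsz

end HyperbolicField

section HyperbolicPullback

/-- The part of the derivative of `hypPullback P m h` which comes with the weight `s ^ (m - 1)`. -/
def hypDerivLower {H F : Type*} [NormedAddCommGroup H] [NormedSpace ℝ H]
    [NormedAddCommGroup F] [NormedSpace ℝ F] (P : H →L[ℝ] H) (m : ℤ) (h : H → F) (x : H) :
    ℝ × H →L[ℝ] F :=
  (ContinuousLinearMap.fst ℝ ℝ H).smulRight ((m : ℝ) • h x + fderiv ℝ h x ((P - (1 - P)) x)) +
    fderiv ℝ h x ∘L ((1 - P) ∘L ContinuousLinearMap.snd ℝ ℝ H)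

/-- The part of the derivative of `hypPullback P m h` which comes with the weight `s ^ (m + 1)`. -/
def hypDerivUpper {H F : Type*} [NormedAddCommGroup H] [NormedSpace ℝ H]
    [NormedAddCommGroup F] [NormedSpace ℝ F] (P : H →L[ℝ] H) (h : H → F) (x : H) :
    ℝ × H →L[ℝ] F :=
  fderiv ℝ h x ∘L (P ∘L ContinuousLinearMap.snd ℝ ℝ H)

universe u
variable {H F : Type u} [NormedAddCommGroup H] [NormedSpace ℝ H] [NormedAddCommGroup F]
  [NormedSpace ℝ F] {P : H →L[ℝ] H} {C : ℝ} {h : H → F}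

namespace IsFlatInCone

theorem hypDerivLower (hh : IsFlatInCone P C h) (m : ℤ) :
    IsFlatInCone P C (hypDerivLower P m h) :=
  (((hh.clm_comp ((m : ℝ) • ContinuousLinearMap.id ℝ F)).add
    (hh.fderiv.clm_apply (P - (1 - P)).contDiff)).clm_comp
      (ContinuousLinearMap.smulRightL ℝ (ℝ × H) F (ContinuousLinearMap.fst ℝ ℝ H))).add
    (hh.fderiv.clm_comp ((ContinuousLinearMap.compL ℝ (ℝ × H) H F).flip
      ((1 - P) ∘L ContinuousLinearMap.snd ℝ ℝ H)))

theorem hypDerivUpper (hh : IsFlatInCone P C h) : IsFlatInCone P C (hypDerivUpper P h) :=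
  hh.fderiv.clm_comp ((ContinuousLinearMap.compL ℝ (ℝ × H) H F).flip
    (P ∘L ContinuousLinearMap.snd ℝ ℝ H))

theorem hasFDerivAt_hypPullback (hP : IsIdempotentElem P) (hh : IsFlatInCone P C h) (m : ℤ)
    (z : ℝ × H) : HasFDerivAt (hypPullback P m h)
      (hypPullback P (m - 1) (_root_.hypDerivLower P m h) z +
        hypPullback P (m + 1) (_root_.hypDerivUpper P h) z) z := by
  obtain ⟨s, x⟩ := z
  rcases lt_trichotomy s 0 with hs | rfl | hs
  · rw [hypPullback_of_nonpos _ hs.le, hypPullback_of_nonpos _ hs.le, add_zero]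
    refine (hasFDerivAt_const (0 : F) (s, x)).congr_of_eventuallyEq ?_
    filter_upwards [(isOpen_lt continuous_fst continuous_const).mem_nhds hs] with z hz
    exact hypPullback_of_nonpos m (le_of_lt hz) z.2
  · rw [hypPullback_of_nonpos _ le_rfl, hypPullback_of_nonpos _ le_rfl, add_zero]
    exact (hh.hypPullback_isBigO hP m x).hasFDerivAt one_lt_two
  · have hpow : HasFDerivAt (fun z : ℝ × H => z.1 ^ m)
        ((m * s ^ (m - 1)) • ContinuousLinearMap.fst ℝ ℝ H) (s, x) :=
      (hasDerivAt_zpow m s (.inl hs.ne')).comp_hasFDerivAt (f := Prod.fst) (s, x) hasFDerivAt_fst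
    have hcomp := (hh.differentiable (hypScale P s x)).hasFDerivAt.comp (s, x)
      (hasFDerivAt_hypScale hP hs.ne' x)
    refine ((hpow.smul hcomp).congr_fderiv ?_).congr_of_eventuallyEq ?_
    · rw [hypPullback_of_pos _ hs, hypPullback_of_pos _ hs]
      ext w
      · simp [_root_.hypDerivLower, _root_.hypDerivUpper, zpow_sub_one₀ hs.ne']
        module
      · simp [_root_.hypDerivLower, _root_.hypDerivUpper, hypScale_apply, zpow_sub_one₀ hs.ne',
          zpow_add_one₀ hs.ne']
        module
    · filter_upwards [(isOpen_lt continuous_const continuous_fst).mem_nhds hs] with z hz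
      exact hypPullback_of_pos m hz z.2

theorem contDiff_hypPullback (hP : IsIdempotentElem P) (hh : IsFlatInCone P C h) (m : ℤ) :
    ContDiff ℝ ∞ (hypPullback P m h) := by
  refine contDiff_infty.2 fun n => ?_
  induction n generalizing F m with
  | zero =>
    exact contDiff_zero.2 (continuous_iff_continuousAt.2 fun z =>
      (hh.hasFDerivAt_hypPullback hP m z).continuousAt)
  | succ n ih =>
    exact contDiff_succ_iff_hasFDerivAt.2 ⟨_, (ih (hh.hypDerivLower m) _).add
      (ih hh.hypDerivUpper _), hh.hasFDerivAt_hypPullback hP m⟩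

theorem flatAt_hypPullback (hP : IsIdempotentElem P) (hh : IsFlatInCone P C h) (m : ℤ) (s : ℝ) :
    _root_.flatAt (hypPullback P m h) (s, 0) := fun n => by
  induction n generalizing F m with
  | zero =>
    rw [← norm_eq_zero, norm_iteratedFDeriv_zero]
    simp [hypPullback, hh.map_zero]
  | succ n ih =>
    rw [← norm_eq_zero, ← norm_iteratedFDeriv_fderiv,
      funext fun z => (hh.hasFDerivAt_hypPullback hP m z).fderiv, norm_eq_zero,
      fun_iteratedFDeriv_add_apply
        (((hh.hypDerivLower m).contDiff_hypPullback hP _).contDiffAt.of_le (mod_cast le_top))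
        ((hh.hypDerivUpper.contDiff_hypPullback hP _).contDiffAt.of_le (mod_cast le_top)),
      ih (hh.hypDerivLower m), ih hh.hypDerivUpper, add_zero]

theorem exists_fderiv_apply_eq [CompleteSpace F] (hP : IsIdempotentElem P)
    (hh : IsFlatInCone P C h) :
    ∃ f : H → F, IsFlat f ∧ ∀ x, fderiv ℝ f x ((P - (1 - P)) x) = h x := by
  have hsmooth := hh.contDiff_hypPullback hP (-1)
  have hflat := IsFlat.intervalIntegral hsmooth (hh.flatAt_hypPullback hP (-1)) 0 1
  refine ⟨_, hflat, fun x => ?_⟩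
  have hflow (l : ℝ) (hl : 0 < l) :
      ∫ s in (0)..1, hypPullback P (-1) h (s, hypScale P l x) =
        ∫ s in (0)..l, hypPullback P (-1) h (s, x) := by
    simp [hypPullback_hypScale hP hl,
      intervalIntegral.smul_integral_comp_mul_right (fun s => hypPullback P (-1) h (s, x)) l]
  have hcurve : HasDerivAt (fun l => hypScale P l x) ((P - (1 - P)) x) 1 := by
    simpa [hypScale_one, Function.comp_def] using
      (hasFDerivAt_hypScale hP one_ne_zero x).comp_hasDerivAt (1 : ℝ)
      ((hasDerivAt_id (1 : ℝ)).prodMk (hasDerivAt_const 1 x))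
  have hchain := (hflat.differentiable (hypScale P 1 x)).hasFDerivAt.comp_hasDerivAt (1 : ℝ) hcurve
  have hftc : HasDerivAt (fun l => ∫ s in (0)..l, hypPullback P (-1) h (s, x)) (h x) 1 := by
    have hcont := hsmooth.continuous.comp (Continuous.prodMk_left x)
    simpa [hypPullback_of_pos, hypScale_one] using
      intervalIntegral.integral_hasDerivAt_right (hcont.intervalIntegrable 0 1)
        hcont.stronglyMeasurable.stronglyMeasurableAtFilter hcont.continuousAt
  have heq : (fun l => ∫ s in (0)..1, hypPullback P (-1) h (s, hypScale P l x)) =ᶠ[𝓝 1]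
      fun l => ∫ s in (0)..l, hypPullback P (-1) h (s, x) :=
    (lt_mem_nhds one_pos).mono hflow
  simpa [hypScale_one] using hchain.unique (hftc.congr_of_eventuallyEq heq)

end IsFlatInCone

end HyperbolicPullback

section Poincare

universe u
variable {H : Type u} [NormedAddCommGroup H] [NormedSpace ℝ H]

/-- The exterior derivative `dμ(u, v) = (D_u μ)(v) - (D_v μ)(u)` of a 1-form `μ`. -/
def extDerivOne {H : Type*} [NormedAddCommGroup H] [NormedSpace ℝ H] (μ : H → H →L[ℝ] ℝ)
    (p u v : H) : ℝ :=
  fderiv ℝ μ p u v - fderiv ℝ μ p v u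

/-- The primitive of a 2-form `σ` produced by the homotopy operator of the Poincaré lemma for the
contraction of `H` onto the origin. -/
def radialPrimitive {H : Type*} [NormedAddCommGroup H] [NormedSpace ℝ H]
    (σ : H → H →L[ℝ] H →L[ℝ] ℝ) (p : H) : H →L[ℝ] ℝ :=
  ∫ t in (0 : ℝ)..1, t • σ (t • p) p

variable {σ : H → H →L[ℝ] H →L[ℝ] ℝ} {μ : H → H →L[ℝ] ℝ} {S : Set H} {p : H}

theorem extDerivOne_sub_fderiv {f : H → ℝ} (hμ : Differentiable ℝ μ) (hf : ContDiff ℝ ∞ f) :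
    extDerivOne (fun q => μ q - fderiv ℝ f q) = extDerivOne μ := by
  ext p u v
  have hf' : Differentiable ℝ (fderiv ℝ f) :=
    (hf.fderiv_right (m := ∞) (by simp)).differentiable (by simp)
  have hsymm : fderiv ℝ (fderiv ℝ f) p u v = fderiv ℝ (fderiv ℝ f) p v u :=
    (hf.contDiffAt.isSymmSndFDerivAt (by simpa using ENat.LEInfty.out)).eq u v
  simp only [extDerivOne, fderiv_fun_sub (hμ p) (hf' p), sub_apply, hsymm]
  ring

theorem fderiv_apply_clm (hμ : DifferentiableAt ℝ μ p) (A : H →L[ℝ] H) (v : H) :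
    fderiv ℝ (fun q => μ q (A q)) p v = fderiv ℝ μ p v (A p) + μ p (A v) := by
  rw [(hμ.hasFDerivAt.clm_apply A.hasFDerivAt).fderiv]
  simp [add_comm]

theorem extDerivOne_apply_of_commute (hμ : DifferentiableAt ℝ μ p) {A B : H →L[ℝ] H}
    (hAB : Commute A B) : extDerivOne μ p (A p) (B p) =
      fderiv ℝ (fun q => μ q (B q)) p (A p) - fderiv ℝ (fun q => μ q (A q)) p (B p) := by
  have hcomm : A (B p) = B (A p) := DFunLike.congr_fun hAB.eq p
  rw [fderiv_apply_clm hμ, fderiv_apply_clm hμ, hcomm, extDerivOne]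
  ring

theorem contDiff_radialIntegrand (hσ : ContDiff ℝ ∞ σ) :
    ContDiff ℝ ∞ fun y : ℝ × H => y.1 • σ (y.1 • y.2) y.2 :=
  contDiff_fst.smul ((hσ.comp (contDiff_fst.smul contDiff_snd)).clm_apply contDiff_snd)

theorem isFlat_radialPrimitive (hσ : IsFlat σ) : IsFlat (radialPrimitive σ) := by
  refine IsFlat.intervalIntegral (contDiff_radialIntegrand hσ.contDiff) (fun t => ?_) 0 1
  have hscale : ContDiff ℝ ∞ fun y : ℝ × H => y.1 • y.2 := contDiff_fst.smul contDiff_snd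
  have hσt : flatAt (fun y : ℝ × H => σ (y.1 • y.2)) (t, 0) :=
    flatAt.comp (x := (t, (0 : H))) (by simpa using hσ.flatAt) hσ.contDiff hscale.contDiffAt
  have hcontr := hσt.bilin (ContinuousLinearMap.apply ℝ (H →L[ℝ] ℝ)) contDiff_snd
    (hσ.contDiff.comp hscale)
  exact hcontr.bilin (ContinuousLinearMap.lsmul ℝ ℝ) contDiff_fst
    ((hσ.contDiff.comp hscale).clm_apply contDiff_snd)

theorem fderiv_radialPrimitive (hσ : ContDiff ℝ ∞ σ) (p u v : H) :
    fderiv ℝ (radialPrimitive σ) p u v =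
      ∫ t in (0 : ℝ)..1, t * (t * fderiv ℝ σ (t • p) u p v + σ (t • p) u v) := by
  set G : ℝ × H → H →L[ℝ] ℝ := fun y => y.1 • σ (y.1 • y.2) y.2
  have hG : ContDiff ℝ 1 G := (contDiff_radialIntegrand hσ).of_le (by simp)
  have hcont : Continuous fun t : ℝ => (fderiv ℝ G (t, p)).comp (.inr ℝ ℝ H) :=
    ((hG.continuous_fderiv (by simp)).comp (by fun_prop)).clm_comp continuous_const
  have hderiv : fderiv ℝ (radialPrimitive σ) p = _ :=
    (hasFDerivAt_intervalIntegral_of_contDiff hG 0 1 p).fderiv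
  rw [hderiv, ContinuousLinearMap.intervalIntegral_apply (hcont.intervalIntegrable _ _),
    ContinuousLinearMap.intervalIntegral_apply
      ((hcont.clm_apply continuous_const).intervalIntegrable _ _)]
  refine intervalIntegral.integral_congr fun t _ => ?_
  have hpartial : HasFDerivAt (fun q => t • σ (t • q) q)
      ((fderiv ℝ G (t, p)).comp (.inr ℝ ℝ H)) p :=
    ((hG.differentiable (by simp)) (t, p)).hasFDerivAt.comp p (hasFDerivAt_prodMk_right t p)
  have hσt : HasFDerivAt (fun q => σ (t • q)) (fderiv ℝ σ (t • p) ∘L (t • .id ℝ H)) p :=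
    (hσ.differentiable (by simp) _).hasFDerivAt.comp p ((hasFDerivAt_id p).const_smul t)
  rw [hpartial.unique ((hσt.clm_apply (hasFDerivAt_id p)).const_smul t)]
  simp only [smul_apply, add_apply,
    ContinuousLinearMap.flip_apply, ContinuousLinearMap.comp_apply, ContinuousLinearMap.id_apply,
    map_smul, smul_eq_mul, id]
  ring

theorem fderiv_apply_antisymm (hσ : DifferentiableAt ℝ σ p)
    (halt : ∀ᶠ q in 𝓝 p, ∀ u v, σ q u v = -σ q v u) (w u v : H) :
    fderiv ℝ σ p w u v = -fderiv ℝ σ p w v u := by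
  have heval (a b : H) := (hσ.hasFDerivAt.clm_apply (hasFDerivAt_const a p)).clm_apply
    (hasFDerivAt_const b p)
  have heq : (fun q => σ q u v) =ᶠ[𝓝 p] fun q => -σ q v u := halt.mono fun q hq => hq u v
  simpa using DFunLike.congr_fun
    (((heval u v).congr_of_eventuallyEq heq.symm).unique (heval v u).neg) w

theorem integral_deriv_sq_mul_radial (hσ : ContDiff ℝ ∞ σ) (p u v : H) :
    ∫ t in (0 : ℝ)..1, (2 * t * σ (t • p) u v + t ^ 2 * fderiv ℝ σ (t • p) p u v) = σ p u v := by
  have hderiv (t : ℝ) : HasDerivAt (fun t : ℝ => t ^ 2 * σ (t • p) u v)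
      (2 * t * σ (t • p) u v + t ^ 2 * fderiv ℝ σ (t • p) p u v) t := by
    have hray : HasDerivAt (fun t : ℝ => t • p) p t := by
      simpa using (hasDerivAt_id t).smul_const p
    have hσt : HasDerivAt (fun t : ℝ => σ (t • p)) (fderiv ℝ σ (t • p) p) t :=
      (hσ.differentiable (by simp) _).hasFDerivAt.comp_hasDerivAt t hray
    refine ((hasDerivAt_pow 2 t).mul ((hσt.clm_apply (hasDerivAt_const t u)).clm_apply
      (hasDerivAt_const t v))).congr_deriv ?_
    simp
  have hcont : Continuous fun t : ℝ =>
      2 * t * σ (t • p) u v + t ^ 2 * fderiv ℝ σ (t • p) p u v := by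
    have := hσ.continuous
    have := hσ.continuous_fderiv (by simp)
    fun_prop
  simpa using intervalIntegral.integral_eq_sub_of_hasDerivAt (a := 0) (b := 1)
    (fun t _ => hderiv t) (hcont.intervalIntegrable _ _)

theorem extDerivOne_radialPrimitive (hσ : ContDiff ℝ ∞ σ) (hS : IsOpen S) (hstar : StarConvex ℝ 0 S)
    (halt : ∀ q ∈ S, ∀ u v, σ q u v = -σ q v u)
    (hclosed : ∀ q ∈ S, ∀ u v w,
      fderiv ℝ σ q u v w + fderiv ℝ σ q v w u + fderiv ℝ σ q w u v = 0)
    (hp : p ∈ S) (u v : H) : extDerivOne (radialPrimitive σ) p u v = σ p u v := by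
  have hint (a b : H) : IntervalIntegrable
      (fun t : ℝ => t * (t * fderiv ℝ σ (t • p) a p b + σ (t • p) a b)) volume 0 1 := by
    have := hσ.continuous
    have := hσ.continuous_fderiv (by simp)
    exact Continuous.intervalIntegrable (by fun_prop) _ _
  rw [extDerivOne, fderiv_radialPrimitive hσ, fderiv_radialPrimitive hσ,
    ← intervalIntegral.integral_sub (hint u v) (hint v u), ← integral_deriv_sq_mul_radial hσ p u v]
  refine intervalIntegral.integral_congr fun t ht => ?_
  rw [uIcc_of_le zero_le_one] at ht
  have htp : t • p ∈ S := hstar.smul_mem hp ht.1 ht.2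
  have hantisymm := fderiv_apply_antisymm (hσ.differentiable (by simp) _)
    (eventually_of_mem (hS.mem_nhds htp) halt) u v p
  linear_combination (-t ^ 2) * hclosed _ htp u v p + t ^ 2 * hantisymm - t * halt _ htp u v

end Poincare

/-- The one-parameter group `exp (t J) = cos t + J sin t` generated by a complex structure `J`,
that is, by an operator with `J * J = -1`. -/
def rot {H : Type*} [NormedAddCommGroup H] [NormedSpace ℝ H] (J : H →L[ℝ] H) (t : ℝ) :
    H →L[ℝ] H :=
  Real.cos t • 1 + Real.sin t • J

/-- A solution `f` of `Df(J x) = g x` when `g` has zero mean along the orbits of `rot J`: the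
average of `t ↦ t • g (rot J t x)` over a period. -/
def circlePrimitive {H F : Type*} [NormedAddCommGroup H] [NormedSpace ℝ H]
    [NormedAddCommGroup F] [NormedSpace ℝ F] (J : H →L[ℝ] H) (g : H → F) (x : H) : F :=
  ∫ t in (0 : ℝ)..2 * Real.pi, ((2 * Real.pi)⁻¹ * t) • g (rot J t x)

section CircleAverage

universe u
variable {H F : Type u} [NormedAddCommGroup H] [NormedSpace ℝ H] [NormedAddCommGroup F]
  [NormedSpace ℝ F] {J A : H →L[ℝ] H} {g : H → F}

theorem rot_apply (t : ℝ) (x : H) : rot J t x = Real.cos t • x + Real.sin t • J x := rfl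

theorem rot_zero : rot J 0 = 1 := by simp [rot]

theorem rot_two_pi : rot J (2 * Real.pi) = 1 := by simp [rot]

theorem rot_apply_of_commute (hA : Commute J A) (t : ℝ) (x : H) :
    rot J t (A x) = A (rot J t x) := by
  have hcomm : J (A x) = A (J x) := DFunLike.congr_fun hA.eq x
  simp [rot_apply, hcomm]

theorem hasDerivAt_rot (hJ : J * J = -1) (t : ℝ) : HasDerivAt (rot J) (J * rot J t) t := by
  refine (((Real.hasDerivAt_cos t).smul_const (1 : H →L[ℝ] H)).add
    ((Real.hasDerivAt_sin t).smul_const J)).congr_deriv ?_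
  simp [rot, mul_add, hJ, add_comm]

theorem hasDerivAt_rot_apply (hJ : J * J = -1) (x : H) (t : ℝ) :
    HasDerivAt (fun t => rot J t x) (J (rot J t x)) t :=
  ((hasDerivAt_rot hJ t).clm_apply (hasDerivAt_const t x)).congr_deriv (by simp)

theorem contDiff_rot : ContDiff ℝ ∞ (rot J) :=
  (Real.contDiff_cos.smul contDiff_const).add (Real.contDiff_sin.smul contDiff_const)

theorem contDiff_rot_apply : ContDiff ℝ ∞ fun y : ℝ × H => rot J y.1 y.2 :=
  (contDiff_rot.comp contDiff_fst).clm_apply contDiff_snd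

theorem contDiff_circleIntegrand (hg : ContDiff ℝ ∞ g) :
    ContDiff ℝ ∞ fun y : ℝ × H => ((2 * Real.pi)⁻¹ * y.1) • g (rot J y.1 y.2) :=
  (contDiff_const.mul contDiff_fst).smul (hg.comp contDiff_rot_apply)

theorem isFlat_circlePrimitive (hg : IsFlat g) : IsFlat (circlePrimitive J g) := by
  refine IsFlat.intervalIntegral (contDiff_circleIntegrand hg.contDiff) (fun t => ?_) 0 _
  have hgt : flatAt (fun y : ℝ × H => g (rot J y.1 y.2)) (t, 0) :=
    flatAt.comp (x := (t, (0 : H))) (by simpa using hg.flatAt) hg.contDiff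
      contDiff_rot_apply.contDiffAt
  exact hgt.bilin (ContinuousLinearMap.lsmul ℝ ℝ) (contDiff_const.mul contDiff_fst)
    (hg.contDiff.comp contDiff_rot_apply)

theorem fderiv_circlePrimitive (hg : ContDiff ℝ ∞ g) (x u : H) :
    fderiv ℝ (circlePrimitive J g) x u = ∫ t in (0 : ℝ)..2 * Real.pi,
      ((2 * Real.pi)⁻¹ * t) • fderiv ℝ g (rot J t x) (rot J t u) := by
  set G : ℝ × H → F := fun y => ((2 * Real.pi)⁻¹ * y.1) • g (rot J y.1 y.2)
  have hG : ContDiff ℝ 1 G := (contDiff_circleIntegrand hg).of_le (by simp)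
  have hcont : Continuous fun t : ℝ => (fderiv ℝ G (t, x)).comp (.inr ℝ ℝ H) :=
    ((hG.continuous_fderiv (by simp)).comp (by fun_prop)).clm_comp continuous_const
  have hderiv : fderiv ℝ (circlePrimitive J g) x = _ :=
    (hasFDerivAt_intervalIntegral_of_contDiff hG 0 (2 * Real.pi) x).fderiv
  rw [hderiv, ContinuousLinearMap.intervalIntegral_apply (hcont.intervalIntegrable _ _)]
  refine intervalIntegral.integral_congr fun t _ => ?_
  have hpartial : HasFDerivAt (fun z => ((2 * Real.pi)⁻¹ * t) • g (rot J t z))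
      ((fderiv ℝ G (t, x)).comp (.inr ℝ ℝ H)) x :=
    ((hG.differentiable (by simp)) (t, x)).hasFDerivAt.comp x (hasFDerivAt_prodMk_right t x)
  have hgt : HasFDerivAt (fun z => g (rot J t z)) (fderiv ℝ g (rot J t x) ∘L rot J t) x :=
    (hg.differentiable (by simp) _).hasFDerivAt.comp x (rot J t).hasFDerivAt
  simp only [hpartial.unique (hgt.const_smul _), smul_apply, ContinuousLinearMap.comp_apply]

theorem fderiv_circlePrimitive_eq_zero (hg : ContDiff ℝ ∞ g) (hA : Commute J A) {x : H}
    (hgA : ∀ t, fderiv ℝ g (rot J t x) (A (rot J t x)) = 0) :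
    fderiv ℝ (circlePrimitive J g) x (A x) = 0 := by
  simp [fderiv_circlePrimitive hg, rot_apply_of_commute hA, hgA]

theorem fderiv_circlePrimitive_apply_eq [CompleteSpace F] (hJ : J * J = -1)
    (hg : ContDiff ℝ ∞ g) {x : H} (hmean : ∫ t in (0 : ℝ)..2 * Real.pi, g (rot J t x) = 0) :
    fderiv ℝ (circlePrimitive J g) x (J x) = g x := by
  have hparts := intervalIntegral.integral_smul_deriv_eq_deriv_smul (a := 0) (b := 2 * Real.pi)
    (u := fun t => (2 * Real.pi)⁻¹ * t) (v := fun t => g (rot J t x))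
    (fun t _ => (hasDerivAt_id t).const_mul _)
    (fun t _ => (hg.differentiable (by simp) _).hasFDerivAt.comp_hasDerivAt t
      (hasDerivAt_rot_apply hJ x t))
    (continuous_const.intervalIntegrable _ _)
    (Continuous.intervalIntegrable (by
      have := hg.continuous_fderiv (by simp)
      have := (contDiff_rot (J := J)).continuous
      fun_prop) _ _)
  simp only [fderiv_circlePrimitive hg, rot_apply_of_commute (Commute.refl J)]
  rw [hparts, intervalIntegral.integral_smul, hmean, inv_mul_cancel₀ Real.two_pi_pos.ne']
  simp [rot_two_pi]

theorem integral_fderiv_rot_eq_zero [CompleteSpace F] (hJ : J * J = -1) (hg : ContDiff ℝ ∞ g)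
    (x : H) : ∫ t in (0 : ℝ)..2 * Real.pi, fderiv ℝ g (rot J t x) (J (rot J t x)) = 0 := by
  rw [intervalIntegral.integral_eq_sub_of_hasDerivAt (f := fun t => g (rot J t x))
    (fun t _ => (hg.differentiable (by simp) _).hasFDerivAt.comp_hasDerivAt t
      (hasDerivAt_rot_apply hJ x t))
    (Continuous.intervalIntegrable (by
      have := hg.continuous_fderiv (by simp)
      have := (contDiff_rot (J := J)).continuous
      fun_prop) _ _)]
  simp [rot_two_pi, rot_zero]

theorem exists_fderiv_apply_complexStructure_eq [CompleteSpace F] (hJ : J * J = -1)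
    (hA : Commute J A) {S : Set H} (hS : ∀ x ∈ S, ∀ t, rot J t x ∈ S) (hg : IsFlat g)
    (hgA : ∀ x ∈ S, fderiv ℝ g x (A x) = 0)
    (hmean : ∀ x ∈ S, ∫ t in (0 : ℝ)..2 * Real.pi, g (rot J t x) = 0) :
    ∃ f : H → F, IsFlat f ∧ ∀ x ∈ S, fderiv ℝ f x (A x) = 0 ∧ fderiv ℝ f x (J x) = g x :=
  ⟨circlePrimitive J g, isFlat_circlePrimitive hg, fun x hx =>
    ⟨fderiv_circlePrimitive_eq_zero hg.contDiff hA fun t => hgA _ (hS x hx t),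
      fderiv_circlePrimitive_apply_eq hJ hg.contDiff (hmean x hx)⟩⟩

end CircleAverage

section Disc

theorem setIntegral_closedBall_eq_setIntegral_polar {F : Type*} [NormedAddCommGroup F]
    [NormedSpace ℝ F] (h : ℂ → F) (R : ℝ) :
    ∫ ζ in Metric.closedBall (0 : ℂ) R, h ζ =
      ∫ y in Ioc 0 R ×ˢ Ioo (-Real.pi) Real.pi, y.1 • h (Complex.polarCoord.symm y) := by
  rw [← integral_indicator measurableSet_closedBall, ← Complex.integral_comp_polarCoord_symm]
  have hsub : Ioc 0 R ×ˢ Ioo (-Real.pi) Real.pi ⊆ polarCoord.target := by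
    rw [polarCoord_target]
    exact prod_mono (fun _ hx => hx.1) subset_rfl
  rw [← inter_eq_right.2 hsub, ← setIntegral_indicator (measurableSet_Ioc.prod measurableSet_Ioo)]
  refine setIntegral_congr_fun polarCoord.open_target.measurableSet fun y hy => ?_
  rw [polarCoord_target] at hy
  have hpos : 0 < y.1 := hy.1
  by_cases hyR : y.1 ≤ R
  · have hmem : y ∈ Ioc 0 R ×ˢ Ioo (-Real.pi) Real.pi := ⟨⟨hpos, hyR⟩, hy.2⟩
    rw [indicator_of_mem (by simpa [abs_of_pos hpos] using hyR), indicator_of_mem hmem]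
  · have hnotMem : y ∉ Ioc 0 R ×ˢ Ioo (-Real.pi) Real.pi := fun hmem => hyR hmem.1.2
    rw [indicator_of_notMem (by simpa [abs_of_pos hpos] using hyR), indicator_of_notMem hnotMem,
      smul_zero]

theorem setIntegral_closedBall_eq_polar {F : Type*} [NormedAddCommGroup F] [NormedSpace ℝ F]
    {h : ℂ → F} (hh : Continuous h) {R : ℝ} (hR : 0 ≤ R) :
    ∫ ζ in Metric.closedBall (0 : ℂ) R, h ζ = ∫ θ in (0 : ℝ)..2 * Real.pi, ∫ t in (0 : ℝ)..R,
      t • h (Complex.polarCoord.symm (t, θ)) := by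
  set k : ℝ × ℝ → F := fun y => y.1 • h (Complex.polarCoord.symm y) with hk
  have hkcont : Continuous k := by
    simp only [hk, Complex.polarCoord_symm_apply]
    fun_prop
  have hkint : IntegrableOn k (Ioc 0 R ×ˢ Ioo (-Real.pi) Real.pi) (volume.prod volume) :=
    (hkcont.continuousOn.integrableOn_compact (isCompact_Icc.prod isCompact_Icc)).mono_set
      (prod_mono Ioc_subset_Icc_self Ioo_subset_Icc_self)
  have hper : Function.Periodic (fun θ : ℝ => ∫ t in (0 : ℝ)..R, k (t, θ)) (2 * Real.pi) := by
    intro θ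
    simp only [hk, Complex.polarCoord_symm_apply, Real.cos_add_two_pi, Real.sin_add_two_pi]
  have hshift := hper.intervalIntegral_add_eq 0 (-Real.pi)
  rw [show -Real.pi + 2 * Real.pi = Real.pi by ring, zero_add] at hshift
  rw [setIntegral_closedBall_eq_setIntegral_polar, hshift, Measure.volume_eq_prod,
    ← Measure.prod_restrict, integral_prod_symm _ (by rwa [Measure.prod_restrict]),
    ← integral_Ioc_eq_integral_Ioo,
    intervalIntegral.integral_of_le (by linarith [Real.pi_pos])]
  simp only [intervalIntegral.integral_of_le hR, hk]

universe u
variable {H : Type u} [NormedAddCommGroup H] [NormedSpace ℝ H] {J : H →L[ℝ] H}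
  {σ : H → H →L[ℝ] H →L[ℝ] ℝ} {S : Set H} {p : H}

theorem antisymm_apply_rot {b : H →L[ℝ] H →L[ℝ] ℝ} (hb : ∀ u v, b u v = -b v u)
    (hJ : J * J = -1) (θ : ℝ) (p : H) : b (rot J θ p) (J (rot J θ p)) = b p (J p) := by
  have hself (u : H) : b u u = 0 := by linarith [hb u u]
  have hJJ : J (J p) = -p := DFunLike.congr_fun hJ p
  simp only [rot_apply, map_add, map_smul, add_apply, smul_apply, smul_eq_mul, hJJ, map_neg,
    hself, hb (J p) p]
  linear_combination b p (J p) * Real.cos_sq_add_sin_sq θ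

theorem integral_radialPrimitive_rot (hσ : ContDiff ℝ ∞ σ) (hJ : J * J = -1)
    (hS : ∀ q ∈ S, ∀ t, rot J t q ∈ S) (hstar : StarConvex ℝ 0 S)
    (halt : ∀ q ∈ S, ∀ u v, σ q u v = -σ q v u) (hp : p ∈ S) :
    ∫ θ in (0 : ℝ)..2 * Real.pi, radialPrimitive σ (rot J θ p) (J (rot J θ p)) =
      ∫ ζ in Metric.closedBall (0 : ℂ) 1, σ (ζ.re • p + ζ.im • J p) p (J p) := by
  have := hσ.continuous
  rw [setIntegral_closedBall_eq_polar (by fun_prop) zero_le_one]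
  refine intervalIntegral.integral_congr fun θ _ => ?_
  have hcont : Continuous fun t : ℝ => t • σ (t • rot J θ p) (rot J θ p) := by fun_prop
  simp only [radialPrimitive]
  rw [ContinuousLinearMap.intervalIntegral_apply (hcont.intervalIntegrable _ _)]
  refine intervalIntegral.integral_congr fun t ht => ?_
  rw [uIcc_of_le zero_le_one] at ht
  have hpolar : (Complex.polarCoord.symm (t, θ)).re • p + (Complex.polarCoord.symm (t, θ)).im • J p
      = t • rot J θ p := by
    simp [Complex.polarCoord_symm_apply, rot_apply, smul_smul, Complex.cos_ofReal_re,
      Complex.sin_ofReal_re]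
  simp only [hpolar, smul_apply]
  rw [antisymm_apply_rot (halt _ (hstar.smul_mem (hS p hp θ) ht.1 ht.2)) hJ]

end Disc

section ConeSplitting

/-- A cutoff, smooth away from the origin and homogeneous of degree `0`, which equals `1` near the
range and `0` near the kernel of the idempotent `P`. It is a smooth step composed with the
proportion of `‖P x‖ ^ 2` in `‖P x‖ ^ 2 + ‖x - P x‖ ^ 2` for a Euclidean norm. -/
def coneCutoff {H : Type*} [NormedAddCommGroup H] [NormedSpace ℝ H] [FiniteDimensional ℝ H]
    (P : H →L[ℝ] H) (x : H) : ℝ :=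
  Real.smoothTransition (3 * (‖toEuclidean (P x)‖ ^ 2 /
    (‖toEuclidean (P x)‖ ^ 2 + ‖toEuclidean (x - P x)‖ ^ 2)) - 1)

universe u
variable {H F : Type u} [NormedAddCommGroup H] [NormedSpace ℝ H] [FiniteDimensional ℝ H]
  [NormedAddCommGroup F] [NormedSpace ℝ F] {P : H →L[ℝ] H} {x : H} {h : H → F}

theorem norm_toEuclidean_sq_add_pos (P : H →L[ℝ] H) (hx : x ≠ 0) :
    0 < ‖toEuclidean (P x)‖ ^ 2 + ‖toEuclidean (x - P x)‖ ^ 2 := by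
  by_cases hP : P x = 0
  · have hpos : 0 < ‖toEuclidean (x - P x)‖ := by simpa [hP] using hx
    positivity
  · have hpos : 0 < ‖toEuclidean (P x)‖ := by simpa using hP
    positivity

theorem isHomogeneousNeg_coneCutoff (P : H →L[ℝ] H) :
    IsHomogeneousNeg 0 fun x => coneCutoff P x • (1 : F →L[ℝ] F) where
  contDiffOn := by
    have hnorm (L : H →L[ℝ] H) : ContDiff ℝ ∞ fun x => ‖toEuclidean (L x)‖ ^ 2 :=
      (toEuclidean.contDiff.comp L.contDiff).norm_sq ℝ
    exact ((Real.smoothTransition.contDiff.comp_contDiffOn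
      ((contDiffOn_const.mul ((hnorm P).contDiffOn.div ((hnorm P).add (hnorm (1 - P))).contDiffOn
        fun x hx => (norm_toEuclidean_sq_add_pos P hx).ne')).sub contDiffOn_const)).smul
      contDiffOn_const)
  map_smul t ht x := by
    have ht0 : t ^ 2 ≠ 0 := by positivity
    simp only [coneCutoff, map_smul, ← smul_sub, norm_smul, mul_pow, ← mul_add,
      Real.norm_eq_abs, sq_abs, mul_div_mul_left _ _ ht0, pow_zero, inv_one, one_smul]

theorem coneCutoff_add_one_sub (P : H →L[ℝ] H) (hx : x ≠ 0) :
    coneCutoff P x + coneCutoff (1 - P) x = 1 := by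
  set a := ‖toEuclidean (P x)‖ ^ 2 with ha
  set b := ‖toEuclidean (x - P x)‖ ^ 2 with hb
  have hab : 0 < a + b := norm_toEuclidean_sq_add_pos P hx
  have hcompl : coneCutoff (1 - P) x = Real.smoothTransition (1 - (3 * (a / (a + b)) - 1)) := by
    simp only [coneCutoff, sub_apply, one_apply_eq_self, sub_sub_cancel, ← ha, ← hb]
    rw [add_comm b a, eq_sub_of_add_eq (show b / (a + b) + a / (a + b) = 1 by
      rw [← add_div, add_comm, div_self hab.ne'])]
    ring_nf
  rw [hcompl, coneCutoff, Real.smoothTransition, Real.smoothTransition, sub_sub_cancel,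
    add_comm (expNegInvGlue (1 - _)), ← add_div]
  exact div_self (Real.smoothTransition.pos_denom _).ne'

theorem norm_toEuclidean_sub_le_of_coneCutoff_ne_zero (hχ : coneCutoff P x ≠ 0) :
    ‖toEuclidean (x - P x)‖ ≤ 2 * ‖toEuclidean (P x)‖ := by
  contrapose! hχ
  refine Real.smoothTransition.zero_of_nonpos ?_
  have hpos : 0 < ‖toEuclidean (x - P x)‖ := lt_of_le_of_lt (by positivity) hχ
  rw [sub_nonpos, mul_div_assoc', div_le_one (by positivity)]
  nlinarith [norm_nonneg (toEuclidean (P x))]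

theorem exists_isFlatInCone_coneCutoff_smul (P : H →L[ℝ] H) (hh : IsFlat h) :
    ∃ C, IsFlatInCone P C fun x => coneCutoff P x • h x := by
  have := FiniteDimensional.proper_real H
  let e : H ≃L[ℝ] EuclideanSpace ℝ (Fin (Module.finrank ℝ H)) := toEuclidean
  refine ⟨1 + ‖e.symm.toContinuousLinearMap‖ * (2 * ‖e.toContinuousLinearMap‖),
    (isHomogeneousNeg_coneCutoff P).isFlat_bilin (.id ℝ (F →L[ℝ] F)) hh, fun x hx => ?_⟩
  calc ‖x‖ = ‖P x + e.symm (e (x - P x))‖ := by simp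
    _ ≤ ‖P x‖ + ‖e.symm.toContinuousLinearMap‖ * ‖e (x - P x)‖ :=
      norm_add_le_of_le le_rfl (e.symm.toContinuousLinearMap.le_opNorm _)
    _ ≤ ‖P x‖ + ‖e.symm.toContinuousLinearMap‖ * (2 * (‖e.toContinuousLinearMap‖ * ‖P x‖)) := by
      gcongr
      exact (norm_toEuclidean_sub_le_of_coneCutoff_ne_zero (left_ne_zero_of_smul hx)).trans
        (by gcongr; exact e.toContinuousLinearMap.le_opNorm _)
    _ = _ := by ring

theorem exists_fderiv_apply_hyperbolic_eq [CompleteSpace F] (hP : IsIdempotentElem P)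
    (hh : IsFlat h) : ∃ f : H → F, IsFlat f ∧ ∀ x, fderiv ℝ f x ((P - (1 - P)) x) = h x := by
  obtain ⟨C₁, hC₁⟩ := exists_isFlatInCone_coneCutoff_smul P hh
  obtain ⟨C₂, hC₂⟩ := exists_isFlatInCone_coneCutoff_smul (1 - P) hh
  obtain ⟨f₁, hf₁, hf₁_eq⟩ := hC₁.exists_fderiv_apply_eq hP
  obtain ⟨f₂, hf₂, hf₂_eq⟩ := hC₂.exists_fderiv_apply_eq hP.one_sub
  refine ⟨fun x => f₁ x - f₂ x, hf₁.sub hf₂, fun x => ?_⟩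
  have hneg : (P - (1 - P)) x = -((1 - P - (1 - (1 - P))) x) := by simp
  rw [fderiv_fun_sub (hf₁.differentiable x) (hf₂.differentiable x), sub_apply, hf₁_eq, hneg,
    map_neg, hf₂_eq, sub_neg_eq_add, ← add_smul]
  rcases eq_or_ne x 0 with rfl | hx
  · rw [hh.map_zero, smul_zero]
  · rw [coneCutoff_add_one_sub P hx, one_smul]

end ConeSplitting

section IsFlatPrimitive

variable {H : Type} [NormedAddCommGroup H] [NormedSpace ℝ H] [FiniteDimensional ℝ H]
  {P J : H →L[ℝ] H} {S : Set H} {σ : H → H →L[ℝ] H →L[ℝ] ℝ} {μ : H → H →L[ℝ] ℝ}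

theorem exists_sub_fderiv_hyperbolic_eq_zero (hP : IsIdempotentElem P) (hμ : IsFlat μ) :
    ∃ f : H → ℝ, IsFlat f ∧ ∀ p, (μ p - fderiv ℝ f p) ((P - (1 - P)) p) = 0 := by
  obtain ⟨f, hf, hf_eq⟩ := exists_fderiv_apply_hyperbolic_eq hP
    (hμ.clm_apply (P - (1 - P)).contDiff)
  exact ⟨f, hf, fun p => by rw [sub_apply, hf_eq, sub_self]⟩

theorem exists_isFlat_primitive (hP : IsIdempotentElem P) (hJ : J * J = -1)
    (hJP : Commute J (P - (1 - P))) (hSo : IsOpen S) (hSs : StarConvex ℝ 0 S)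
    (hSr : ∀ q ∈ S, ∀ t, rot J t q ∈ S) (hσ : IsFlat σ)
    (halt : ∀ q ∈ S, ∀ u v, σ q u v = -σ q v u)
    (hclosed : ∀ q ∈ S, ∀ u v w,
      fderiv ℝ σ q u v w + fderiv ℝ σ q v w u + fderiv ℝ σ q w u v = 0)
    (hlag : ∀ q ∈ S, σ q ((P - (1 - P)) q) (J q) = 0)
    (hdisc : ∀ q ∈ S, ∫ ζ in Metric.closedBall (0 : ℂ) 1,
      σ (ζ.re • q + ζ.im • J q) q (J q) = 0) :
    ∃ η : H → H →L[ℝ] ℝ, IsFlat η ∧ ∀ q ∈ S, η q ((P - (1 - P)) q) = 0 ∧ η q (J q) = 0 ∧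
      ∀ u v, extDerivOne η q u v = σ q u v := by
  have hμ : IsFlat (radialPrimitive σ) := isFlat_radialPrimitive hσ
  obtain ⟨f₁, hf₁, hX⟩ := exists_sub_fderiv_hyperbolic_eq_zero hP hμ
  set μ : H → H →L[ℝ] ℝ := fun p => radialPrimitive σ p - fderiv ℝ f₁ p with hμ_def
  have hμ' : IsFlat μ := hμ.sub hf₁.fderiv
  have hdμ : ∀ q ∈ S, ∀ u v, extDerivOne μ q u v = σ q u v := fun q hq u v => by
    rw [hμ_def, extDerivOne_sub_fderiv hμ.differentiable hf₁.contDiff,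
      extDerivOne_radialPrimitive hσ.contDiff hSo hSs halt hclosed hq]
  have hgX : ∀ q ∈ S, fderiv ℝ (fun x => μ x (J x)) q ((P - (1 - P)) q) = 0 := fun q hq => by
    have hX0 : (fun x => μ x ((P - (1 - P)) x)) = fun _ => 0 := funext hX
    have hcomm := extDerivOne_apply_of_commute (hμ'.differentiable q) hJP.symm
    rwa [hdμ q hq, hlag q hq, hX0, fderiv_fun_const, Pi.zero_apply, zero_apply, sub_zero,
      eq_comm] at hcomm
  have hmean : ∀ q ∈ S, ∫ t in (0 : ℝ)..2 * Real.pi, μ (rot J t q) (J (rot J t q)) = 0 := by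
    intro q hq
    have hrot := (contDiff_rot (J := J)).continuous
    have hμc := hμ.contDiff.continuous
    have hf₁c := hf₁.fderiv.contDiff.continuous
    simp only [hμ_def, sub_apply]
    rw [intervalIntegral.integral_sub ((by fun_prop : Continuous _).intervalIntegrable _ _)
      ((by fun_prop : Continuous _).intervalIntegrable _ _),
      integral_radialPrimitive_rot hσ.contDiff hJ hSr hSs halt hq, hdisc q hq,
      integral_fderiv_rot_eq_zero hJ hf₁.contDiff, sub_zero]
  obtain ⟨f₂, hf₂, hf₂_eq⟩ := exists_fderiv_apply_complexStructure_eq hJ hJP hSr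
    (hμ'.clm_apply J.contDiff) hgX hmean
  refine ⟨fun p => μ p - fderiv ℝ f₂ p, hμ'.sub hf₂.fderiv, fun q hq => ⟨?_, ?_, fun u v => ?_⟩⟩
  · rw [sub_apply, hX, (hf₂_eq q hq).1, sub_zero]
  · rw [sub_apply, (hf₂_eq q hq).2, sub_self]
  · rw [extDerivOne_sub_fderiv hμ'.differentiable hf₂.contDiff, hdμ q hq]

end IsFlatPrimitive

section FlowShear

/-- The map `p ↦ exp (a p • A) (exp (b p • B) p)`, which moves every point along the flows of the
linear vector fields `A` and `B` for the times `a p` and `b p`. -/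
def flowShear {H : Type*} [NormedAddCommGroup H] [NormedSpace ℝ H] (A B : H →L[ℝ] H)
    (a b : H → ℝ) (p : H) : H :=
  NormedSpace.exp (a p • A) (NormedSpace.exp (b p • B) p)

theorem IsFlat.comp_left_sub {E F G : Type*} [NormedAddCommGroup E] [NormedSpace ℝ E]
    [NormedAddCommGroup F] [NormedSpace ℝ F] [NormedAddCommGroup G] [NormedSpace ℝ G]
    {f : E → F} {g : F → G} (hg : ContDiff ℝ ∞ g) (hf : IsFlat f) :
    IsFlat fun x => g (f x) - g 0 := by
  refine ⟨(hg.comp hf.contDiff).sub contDiff_const, flatAt_iff_fderiv.2 ⟨?_, ?_⟩⟩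
  · rw [hf.map_zero, sub_self]
  · have hfderiv : fderiv ℝ (fun x => g (f x) - g 0) =
        fun x => (fderiv ℝ g (f x)).comp (fderiv ℝ f x) := funext fun x =>
      (((hg.differentiable (by simp) _).hasFDerivAt.comp x
        (hf.differentiable x).hasFDerivAt).sub_const _).fderiv
    rw [hfderiv]
    exact (hf.fderiv.bilin (.compL ℝ E F G)
      ((hg.fderiv_right (by simp)).comp hf.contDiff)).flatAt

variable {H : Type*} [NormedAddCommGroup H] [NormedSpace ℝ H] {A B : H →L[ℝ] H}
  {ω₀ : H →L[ℝ] H →L[ℝ] ℝ} {a b : H → ℝ}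

theorem apply_apply_of_commute (hω : ∀ u v, ω₀ u v = -ω₀ v u) (hA : ∀ u v, ω₀ (A u) v = -ω₀ u (A v))
    (hB : ∀ u v, ω₀ (B u) v = -ω₀ u (B v)) (hAB : Commute A B) (p : H) : ω₀ (A p) (B p) = 0 := by
  have hcomm : A (B p) = B (A p) := DFunLike.congr_fun hAB.eq p
  linarith [hA p (B p), hB p (A p), hω (A p) (B p), hcomm ▸ hA p (B p)]

theorem exp_smul_apply_of_commute (hAB : Commute A B) (t : ℝ) (p : H) :
    NormedSpace.exp (t • A) (B p) = B (NormedSpace.exp (t • A) p) :=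
  DFunLike.congr_fun (hAB.smul_left t).exp_left.eq p

theorem extDerivOne_of_eqOn {η : H → H →L[ℝ] ℝ} {S : Set H} (hS : IsOpen S)
    {L M : H →L[ℝ] H →L[ℝ] ℝ} (hL : ∀ u v, L u v = L v u) (hM : ∀ u v, M u v = M v u)
    (ha : Differentiable ℝ a) (hb : Differentiable ℝ b)
    (hη : ∀ p ∈ S, ∀ v, η p v = a p * L p v + b p * M p v) {p : H} (hp : p ∈ S) (u v : H) :
    extDerivOne η p u v = (fderiv ℝ a p u * L p v - fderiv ℝ a p v * L p u) +
      (fderiv ℝ b p u * M p v - fderiv ℝ b p v * M p u) := by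
  have hη' : η =ᶠ[𝓝 p] fun q => a q • L q + b q • M q :=
    eventually_of_mem (hS.mem_nhds hp) fun q hq => ContinuousLinearMap.ext (hη q hq)
  have hderiv : HasFDerivAt (fun q => a q • L q + b q • M q) _ p :=
    ((ha p).hasFDerivAt.smul L.hasFDerivAt).add ((hb p).hasFDerivAt.smul M.hasFDerivAt)
  rw [extDerivOne, hη'.fderiv_eq, hderiv.fderiv]
  simp only [add_apply, smul_apply, ContinuousLinearMap.smulRight_apply, smul_eq_mul, hL u v,
    hM u v]
  ring

variable [CompleteSpace H]

theorem contDiff_exp_smul (A : H →L[ℝ] H) : ContDiff ℝ ∞ fun t : ℝ => NormedSpace.exp (t • A) :=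
  contDiff_iff_contDiffAt.2 fun _ => (NormedSpace.exp_analytic (𝕂 := ℝ) _).contDiffAt.comp _
    (contDiff_id.smul contDiff_const).contDiffAt

theorem apply_exp_smul_exp_smul (hA : ∀ u v, ω₀ (A u) v = -ω₀ u (A v)) (t : ℝ) (u v : H) :
    ω₀ (NormedSpace.exp (t • A) u) (NormedSpace.exp (t • A) v) = ω₀ u v := by
  have hexp (w : H) (s : ℝ) : HasDerivAt (fun s : ℝ => NormedSpace.exp (s • A) w)
      (A (NormedSpace.exp (s • A) w)) s :=
    ((hasDerivAt_exp_smul_const' A s).clm_apply (hasDerivAt_const s w)).congr_deriv (by simp)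
  have hderiv (s : ℝ) : HasDerivAt
      (fun s : ℝ => ω₀ (NormedSpace.exp (s • A) u) (NormedSpace.exp (s • A) v)) 0 s :=
    ((ω₀.hasFDerivAt.comp_hasDerivAt s (hexp u s)).clm_apply (hexp v s)).congr_deriv
      (by simp [hA])
  simpa using is_const_of_deriv_eq_zero (fun s => (hderiv s).differentiableAt)
    (fun s => (hderiv s).deriv) t 0

theorem hasFDerivAt_exp_smul_apply {f : H → H} {p : H} {a' : H →L[ℝ] ℝ} {f' : H →L[ℝ] H}
    (A : H →L[ℝ] H) (ha : HasFDerivAt a a' p) (hf : HasFDerivAt f f' p) :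
    HasFDerivAt (fun p => NormedSpace.exp (a p • A) (f p))
      (NormedSpace.exp (a p • A) ∘L (f' + a'.smulRight (A (f p)))) p := by
  have hexp := (hasDerivAt_exp_smul_const A (a p)).hasFDerivAt.comp p ha
  refine (hexp.clm_apply hf).congr_fderiv (ContinuousLinearMap.ext fun u => ?_)
  simp

theorem fderiv_flowShear (hAB : Commute A B) (ha : Differentiable ℝ a) (hb : Differentiable ℝ b)
    (p u : H) : fderiv ℝ (flowShear A B a b) p u = NormedSpace.exp (a p • A)
      (NormedSpace.exp (b p • B) (u + fderiv ℝ a p u • A p + fderiv ℝ b p u • B p)) := by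
  have hderiv : HasFDerivAt (flowShear A B a b) _ p :=
    hasFDerivAt_exp_smul_apply A (ha p).hasFDerivAt
      (hasFDerivAt_exp_smul_apply B (hb p).hasFDerivAt (hasFDerivAt_id p))
  rw [hderiv.fderiv]
  simp only [ContinuousLinearMap.comp_apply, add_apply, ContinuousLinearMap.smulRight_apply,
    ContinuousLinearMap.id_apply, map_add, map_smul, exp_smul_apply_of_commute hAB.symm]
  abel

theorem isFlat_flowShear_sub (ha : IsFlat a) (hb : IsFlat b) :
    IsFlat fun p => flowShear A B a b p - p := by
  have hexp (A : H →L[ℝ] H) {a : H → ℝ} (ha : IsFlat a) :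
      IsFlat fun p => NormedSpace.exp (a p • A) p - p := by
    simpa using (ha.comp_left_sub (contDiff_exp_smul A)).clm_apply contDiff_id
  have hsplit := ((hexp B hb).bilin (.id ℝ (H →L[ℝ] H))
    ((contDiff_exp_smul A).comp ha.contDiff)).add (hexp A ha)
  simpa [flowShear] using hsplit

theorem apply_flowShear {C : H →L[ℝ] H} (hAC : Commute A C)
    (hBC : Commute B C) (hA : ∀ u v, ω₀ (A u) v = -ω₀ u (A v))
    (hB : ∀ u v, ω₀ (B u) v = -ω₀ u (B v)) (p : H) :
    ω₀ (flowShear A B a b p) (C (flowShear A B a b p)) = ω₀ p (C p) := by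
  simp only [flowShear, ← exp_smul_apply_of_commute hAC, ← exp_smul_apply_of_commute hBC,
    apply_exp_smul_exp_smul hA, apply_exp_smul_exp_smul hB]

theorem apply_fderiv_flowShear (hω : ∀ u v, ω₀ u v = -ω₀ v u)
    (hA : ∀ u v, ω₀ (A u) v = -ω₀ u (A v)) (hB : ∀ u v, ω₀ (B u) v = -ω₀ u (B v))
    (hAB : Commute A B) (ha : Differentiable ℝ a) (hb : Differentiable ℝ b) (p u v : H) :
    ω₀ (fderiv ℝ (flowShear A B a b) p u) (fderiv ℝ (flowShear A B a b) p v) = ω₀ u v +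
      (fderiv ℝ a p u * ω₀ (A p) v - fderiv ℝ a p v * ω₀ (A p) u) +
      (fderiv ℝ b p u * ω₀ (B p) v - fderiv ℝ b p v * ω₀ (B p) u) := by
  have hself (w : H) : ω₀ w w = 0 := by linarith [hω w w]
  have hAB0 := apply_apply_of_commute hω hA hB hAB p
  have hBA0 := apply_apply_of_commute hω hB hA hAB.symm p
  simp only [fderiv_flowShear hAB ha hb, apply_exp_smul_exp_smul hA, apply_exp_smul_exp_smul hB,
    map_add, map_smul, add_apply, smul_apply, smul_eq_mul, hself, hAB0, hBA0,
    hω u (A p), hω u (B p)]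
  ring

theorem apply_fderiv_flowShear_eq_add_extDerivOne (hω : ∀ u v, ω₀ u v = -ω₀ v u)
    (hA : ∀ u v, ω₀ (A u) v = -ω₀ u (A v)) (hB : ∀ u v, ω₀ (B u) v = -ω₀ u (B v))
    (hAB : Commute A B) (ha : Differentiable ℝ a) (hb : Differentiable ℝ b)
    {η : H → H →L[ℝ] ℝ} {S : Set H} (hS : IsOpen S)
    (hη : ∀ p ∈ S, ∀ v, η p v = a p * ω₀ (A p) v + b p * ω₀ (B p) v) {p : H} (hp : p ∈ S)
    (u v : H) : ω₀ (fderiv ℝ (flowShear A B a b) p u) (fderiv ℝ (flowShear A B a b) p v) =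
      ω₀ u v + extDerivOne η p u v := by
  rw [apply_fderiv_flowShear hω hA hB hAB ha hb, add_assoc,
    extDerivOne_of_eqOn (L := ω₀ ∘L A) (M := ω₀ ∘L B) hS (fun u v => (hA u v).trans (hω _ _).symm)
      (fun u v => (hB u v).trans (hω _ _).symm) ha hb hη hp u v]
  rfl

end FlowShear

section LocalInverse

variable {E F : Type*} [NormedAddCommGroup E] [NormedSpace ℝ E] [CompleteSpace E]
  [NormedAddCommGroup F] [NormedSpace ℝ F]

theorem exists_contDiffOn_rightInverse {n : WithTop ℕ∞} {Ψ : E → F} {Ψ' : E ≃L[ℝ] F} {x : E}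
    (hΨ : ContDiff ℝ n Ψ) (hn : n ≠ 0) (hx : HasFDerivAt Ψ (Ψ' : E →L[ℝ] F) x) {S : Set E}
    (hS : IsOpen S) (hxS : x ∈ S) :
    ∃ (Φ : F → E) (V : Set F), IsOpen V ∧ Ψ x ∈ V ∧ ContDiffOn ℝ n Φ V ∧ InjOn Φ V ∧
      Φ (Ψ x) = x ∧ ∀ y ∈ V, Φ y ∈ S ∧ Ψ (Φ y) = y := by
  have hstrict : HasStrictFDerivAt Ψ (Ψ' : E →L[ℝ] F) x :=
    hΨ.contDiffAt.hasStrictFDerivAt' hx hn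
  let e := hstrict.toOpenPartialHomeomorph Ψ
  have hxe : x ∈ e.source := hstrict.mem_toOpenPartialHomeomorph_source
  have hleft : e.symm (Ψ x) = x := e.left_inv hxe
  let S' := S ∩ fderiv ℝ Ψ ⁻¹' range ((↑) : (E ≃L[ℝ] F) → E →L[ℝ] F)
  have hS' : IsOpen S' :=
    hS.inter (ContinuousLinearEquiv.isOpen.preimage (hΨ.continuous_fderiv hn))
  have hxS' : e.symm (Ψ x) ∈ S' := hleft.symm ▸ ⟨hxS, Ψ', hx.fderiv.symm⟩
  refine ⟨e.symm, e.target ∩ e.symm ⁻¹' S', e.isOpen_inter_preimage_symm hS',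
    ⟨e.map_source hxe, hxS'⟩, fun y hy => ?_, e.symm.injOn.mono inter_subset_left, hleft,
    fun y hy => ⟨hy.2.1, e.right_inv hy.1⟩⟩
  obtain ⟨f, hf⟩ := hy.2.2
  refine (e.contDiffAt_symm hy.1 (f₀' := f) ?_ hΨ.contDiffAt).contDiffWithinAt
  rw [hf]
  exact (hΨ.differentiable hn _).hasFDerivAt

theorem exists_rightInverse_of_isFlat_sub {Ψ : E → E} (hΨ : IsFlat fun x => Ψ x - x) {S : Set E}
    (hS : IsOpen S) (h0S : (0 : E) ∈ S) :
    ∃ (Φ : E → E) (V : Set E), IsOpen V ∧ (0 : E) ∈ V ∧ ContDiffOn ℝ ∞ Φ V ∧ InjOn Φ V ∧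
      flatAt (fun y => Φ y - y) 0 ∧ ∀ y ∈ V, Φ y ∈ S ∧ Ψ (Φ y) = y ∧
        ∀ u, fderiv ℝ Ψ (Φ y) (fderiv ℝ Φ y u) = u := by
  have hΨs : ContDiff ℝ ∞ Ψ := by simpa using hΨ.contDiff.add contDiff_id
  have hΨ0 : Ψ 0 = 0 := by simpa using hΨ.map_zero
  have hΨ' : HasFDerivAt Ψ (ContinuousLinearEquiv.refl ℝ E : E →L[ℝ] E) 0 := by
    simpa [hΨ.fderiv.map_zero] using (hΨ.differentiable 0).hasFDerivAt.fun_add (hasFDerivAt_id 0)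
  obtain ⟨Φ, V, hV, h0V, hΦ, hinj, hΦ0, hΦV⟩ :=
    exists_contDiffOn_rightInverse hΨs (by simp) hΨ' hS h0S
  rw [hΨ0] at h0V hΦ0
  refine ⟨Φ, V, hV, h0V, hΦ, hinj, ?_, fun y hy => ⟨(hΦV y hy).1, (hΦV y hy).2, fun u => ?_⟩⟩
  · have hΦs : ContDiffAt ℝ ∞ Φ 0 := hΦ.contDiffAt (hV.mem_nhds h0V)
    refine flatAt.congr (flatAt.comp (hΦ0.symm ▸ hΨ.neg.flatAt) hΨ.neg.contDiff hΦs)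
      (eventually_of_mem (hV.mem_nhds h0V) fun y hy => ?_)
    simp only [(hΦV y hy).2, neg_sub]
  · have hcomp := (hΨs.differentiable (by simp) (Φ y)).hasFDerivAt.comp y
      ((hΦ.contDiffAt (hV.mem_nhds hy)).differentiableAt (by simp)).hasFDerivAt
    have hid : HasFDerivAt (Ψ ∘ Φ) (ContinuousLinearMap.id ℝ E) y :=
      (hasFDerivAt_id y).congr_of_eventuallyEq
        (eventually_of_mem (hV.mem_nhds hy) fun z hz => (hΦV z hz).2)
    exact DFunLike.congr_fun (hcomp.unique hid) u

end LocalInverse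

end SmoothAnalysis

section FocusFocus

open Matrix

/-- The projection of `ℝ⁴` onto the position coordinates `(x₁, x₂)`. -/
def positionProj : E4 →L[ℝ] E4 :=
  .pi ![.proj 0, 0, .proj 2, 0]

/-- The linear field `X01` as a continuous linear map. -/
def X01L : E4 →L[ℝ] E4 := positionProj - (1 - positionProj)

/-- The linear field `X02` as a continuous linear map. -/
def X02L : E4 →L[ℝ] E4 :=
  .pi ![-.proj 2, -.proj 3, .proj 0, .proj 1]

/-- The operator `K` with `omega0 u v = K u ⬝ᵥ v`. -/
def omega0Op : E4 →L[ℝ] E4 :=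
  .pi ![.proj 1, -.proj 0, .proj 3, -.proj 2]

/-- The form `omega0` as a continuous bilinear map. -/
def omega0L : E4 →L[ℝ] E4 →L[ℝ] ℝ :=
  (LinearMap.mk₂ ℝ omega0
    (fun _ _ _ => by simp only [omega0, Pi.add_apply]; ring)
    (fun _ _ _ => by simp only [omega0, Pi.smul_apply, smul_eq_mul]; ring)
    (fun _ _ _ => by simp only [omega0, Pi.add_apply]; ring)
    (fun _ _ _ => by simp only [omega0, Pi.smul_apply, smul_eq_mul]; ring)).toContinuousBilinearMap

/-- The open ball for the Euclidean norm; the norm of `E4` is the sup norm, whose balls are not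
invariant under the flow of `X02`. -/
def euclideanBall (r : ℝ) : Set E4 := {p | p ⬝ᵥ p < r ^ 2}

theorem X01L_apply (p : E4) : X01L p = X01 p := by
  ext i
  fin_cases i <;> simp [X01L, positionProj, X01]

theorem omega0Op_apply (p : E4) : omega0Op p = ![p 1, -p 0, p 3, -p 2] := by
  ext i
  fin_cases i <;> simp [omega0Op]

theorem X02L_apply (p : E4) : X02L p = X02 p := by
  ext i
  fin_cases i <;> simp [X02L, X02]

theorem omega0L_apply (u v : E4) : omega0L u v = omega0 u v := rfl

theorem omega0_antisymm (u v : E4) : omega0 u v = -omega0 v u := by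
  simp only [omega0]
  ring

theorem omega0_X01_X02 (p : E4) : omega0 (X01 p) (X02 p) = 0 := by
  simp only [omega0, X01, X02, cons_val]
  ring

theorem omega0L_X01L (u v : E4) : omega0L (X01L u) v = -omega0L u (X01L v) := by
  simp only [omega0L_apply, omega0, X01L_apply, X01, cons_val]
  ring

theorem omega0L_X02L (u v : E4) : omega0L (X02L u) v = -omega0L u (X02L v) := by
  simp only [omega0L_apply, omega0, X02L_apply, X02, cons_val]
  ring

theorem isIdempotentElem_positionProj : IsIdempotentElem positionProj := by
  ext p i
  fin_cases i <;> simp [positionProj]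

theorem X02L_mul_self : X02L * X02L = -1 := by
  ext p i
  fin_cases i <;> simp [X02L]

theorem commute_X02L_X01L : Commute X02L X01L := by
  ext p i
  fin_cases i <;> simp [X02L_apply, X01L_apply, X01, X02]

theorem discMap_eq (p : E4) (ζ : ℂ) : discMap p ζ = ζ.re • p + ζ.im • X02L p := by
  ext i
  fin_cases i <;> simp [discMap, X02L_apply, X02, sub_eq_add_neg]

theorem q1_eq (p : E4) : q1 p = omega0L p (X01L p) / 2 := by
  simp only [q1, omega0L_apply, omega0, X01L_apply, X01, cons_val]
  ring

theorem q2_eq (p : E4) : q2 p = omega0L p (X02L p) / 2 := by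
  simp only [q2, omega0L_apply, omega0, X02L_apply, X02, cons_val]
  ring

theorem dotProduct_smul_add_smul_X02L (s t : ℝ) (p : E4) :
    (s • p + t • X02L p) ⬝ᵥ (s • p + t • X02L p) = (s ^ 2 + t ^ 2) * (p ⬝ᵥ p) := by
  simp only [dotProduct, Fin.sum_univ_four, X02L_apply, X02, Pi.add_apply, Pi.smul_apply,
    smul_eq_mul, cons_val]
  ring

theorem smul_add_smul_X02L_mem_euclideanBall {r s t : ℝ} {p : E4} (hp : p ∈ euclideanBall r)
    (hst : s ^ 2 + t ^ 2 ≤ 1) : s • p + t • X02L p ∈ euclideanBall r := by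
  refine (dotProduct_smul_add_smul_X02L s t p).trans_lt (lt_of_le_of_lt ?_ hp)
  exact mul_le_of_le_one_left (dotProduct_self_star_nonneg p) hst

theorem zero_mem_euclideanBall {r : ℝ} (hr : 0 < r) : 0 ∈ euclideanBall r :=
  (zero_dotProduct (0 : E4)).trans_lt (by positivity)

theorem isOpen_euclideanBall (r : ℝ) : IsOpen (euclideanBall r) :=
  isOpen_lt (by fun_prop) continuous_const

theorem starConvex_euclideanBall (r : ℝ) : StarConvex ℝ 0 (euclideanBall r) := by
  refine starConvex_zero_iff.2 fun p hp t ht0 ht1 => ?_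
  simpa using smul_add_smul_X02L_mem_euclideanBall (t := 0) hp (by nlinarith : t ^ 2 + 0 ^ 2 ≤ 1)

theorem rot_mem_euclideanBall {r : ℝ} {p : E4} (hp : p ∈ euclideanBall r) (t : ℝ) :
    rot X02L t p ∈ euclideanBall r :=
  smul_add_smul_X02L_mem_euclideanBall hp (Real.cos_sq_add_sin_sq t).le

theorem discMap_mem_euclideanBall {r : ℝ} {p : E4} (hp : p ∈ euclideanBall r) {ζ : ℂ}
    (hζ : ‖ζ‖ ≤ 1) : discMap p ζ ∈ euclideanBall r := by
  rw [discMap_eq]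
  refine smul_add_smul_X02L_mem_euclideanBall hp ?_
  rw [sq, sq, ← Complex.normSq_apply, Complex.normSq_eq_norm_sq]
  exact pow_le_one₀ (norm_nonneg ζ) hζ

theorem euclideanBall_subset_ball {r : ℝ} (hr : 0 < r) : euclideanBall r ⊆ Metric.ball 0 r := by
  intro p hp
  rw [mem_ball_zero_iff, pi_norm_lt_iff hr]
  intro i
  refine abs_lt_of_sq_lt_sq ((?_ : p i ^ 2 ≤ p ⬝ᵥ p).trans_lt hp) hr.le
  simpa only [sq, dotProduct] using
    Finset.single_le_sum (fun j _ => mul_self_nonneg (p j)) (Finset.mem_univ i)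

-- The four vectors on the right form an orthogonal frame, each of squared length `p ⬝ᵥ p`.
theorem dotProduct_self_smul_eq_frame (p v : E4) :
    (p ⬝ᵥ p) • v = omega0L (X01L p) v • omega0Op (X01L p) +
      omega0L (X02L p) v • omega0Op (X02L p) + (X01L p ⬝ᵥ v) • X01L p + (X02L p ⬝ᵥ v) • X02L p := by
  ext i
  fin_cases i <;>
    simp [dotProduct, Fin.sum_univ_four, omega0L_apply, omega0, omega0Op_apply, X01L_apply,
      X02L_apply, X01, X02] <;> ring

theorem isHomogeneousNeg_inv_dotProduct_self :
    IsHomogeneousNeg 2 fun p : E4 => (p ⬝ᵥ p)⁻¹ where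
  contDiffOn := by
    refine ContDiffOn.inv (ContDiff.contDiffOn ?_) fun p hp => dotProduct_self_eq_zero.not.2 hp
    simp only [dotProduct]
    fun_prop
  map_smul t _ p := by
    rw [smul_dotProduct, dotProduct_smul, smul_smul, smul_eq_mul, mul_inv, sq, smul_eq_mul]

theorem exists_isFlat_coeff_of_apply_eq_zero {η : E4 → E4 →L[ℝ] ℝ} {S : Set E4} (hη : IsFlat η)
    (hS : ∀ p ∈ S, η p (X01L p) = 0 ∧ η p (X02L p) = 0) :
    ∃ a b : E4 → ℝ, IsFlat a ∧ IsFlat b ∧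
      ∀ p ∈ S, ∀ v, η p v = a p * omega0L (X01L p) v + b p * omega0L (X02L p) v := by
  have hcoeff (A : E4 →L[ℝ] E4) : IsFlat fun p => (p ⬝ᵥ p)⁻¹ * η p (A p) :=
    isHomogeneousNeg_inv_dotProduct_self.isFlat_bilin (.mul ℝ ℝ) (hη.clm_apply A.contDiff)
  refine ⟨_, _, hcoeff (omega0Op ∘L X01L), hcoeff (omega0Op ∘L X02L), fun p hp v => ?_⟩
  rcases eq_or_ne p 0 with rfl | hp0
  · simp [hη.map_zero]
  have hframe := congrArg (η p) (dotProduct_self_smul_eq_frame p v)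
  simp only [map_add, map_smul, (hS p hp).1, (hS p hp).2, smul_zero, add_zero] at hframe
  rw [← inv_smul_smul₀ (dotProduct_self_eq_zero.not.2 hp0) (η p v), hframe]
  simp only [ContinuousLinearMap.comp_apply, smul_eq_mul]
  ring

theorem exists_isFlat_eqOn_sub_omega0L {ω : E4 → E4 →L[ℝ] E4 →L[ℝ] ℝ} {U : Set E4}
    (hU : IsOpen U) (hU0 : 0 ∈ U) (hω : ContDiffOn ℝ (⊤ : ℕ∞) ω U)
    (hflat : ∀ u v, flatAt (fun p => ω p u v - omega0 u v) 0) :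
    ∃ σ r, IsFlat σ ∧ 0 < r ∧ ∀ p ∈ euclideanBall r, p ∈ U ∧ σ p = ω p - omega0L := by
  obtain ⟨σ, hσ, hσω⟩ := exists_contDiff_eventuallyEq hU hU0
    (hω.sub (contDiffOn_const (c := omega0L)))
  obtain ⟨r, hr, hball⟩ := Metric.eventually_nhds_iff_ball.1 ((hU.eventually_mem hU0).and hσω)
  refine ⟨σ, r, ⟨hσ, ?_⟩, hr, fun p hp => hball p (euclideanBall_subset_ball hr hp)⟩
  refine flatAt_of_forall_apply hσ.contDiffAt fun u => ?_
  refine flatAt_of_forall_apply (hσ.clm_apply contDiff_const).contDiffAt fun v => ?_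
  exact (hflat u v).congr (hσω.mono fun p hp => DFunLike.congr_fun (DFunLike.congr_fun hp u) v)

theorem exists_isFlat_extDerivOne_eq_sub_omega0 {ω : E4 → E4 →L[ℝ] E4 →L[ℝ] ℝ} {U : Set E4}
    (hU : IsOpen U) (hU0 : 0 ∈ U) (hω : ContDiffOn ℝ (⊤ : ℕ∞) ω U)
    (halt : ∀ p ∈ U, ∀ u v, ω p u v = -ω p v u)
    (hclosed : ∀ p ∈ U, ∀ u v w, fderiv ℝ (fun x => ω x v w) p u +
      fderiv ℝ (fun x => ω x w u) p v + fderiv ℝ (fun x => ω x u v) p w = 0)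
    (hflat : ∀ u v, flatAt (fun p => ω p u v - omega0 u v) 0)
    (hlag : ∀ p ∈ U, ω p (X01 p) (X02 p) = 0)
    (hdisc : ∀ p ∈ U, ∫ ζ in Metric.closedBall (0 : ℂ) 1,
      (ω (discMap p ζ) p (Jmul p) - omega0 p (Jmul p)) = 0) :
    ∃ (η : E4 → E4 →L[ℝ] ℝ) (S : Set E4), IsFlat η ∧ IsOpen S ∧ 0 ∈ S ∧
      ∀ p ∈ S, η p (X01L p) = 0 ∧ η p (X02L p) = 0 ∧
        ∀ u v, extDerivOne η p u v = ω p u v - omega0 u v := by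
  obtain ⟨σ, r, hσ, hr, hσω⟩ := exists_isFlat_eqOn_sub_omega0L hU hU0 hω hflat
  have hσ_apply : ∀ p ∈ euclideanBall r, ∀ u v, σ p u v = ω p u v - omega0 u v :=
    fun p hp u v => DFunLike.congr_fun (DFunLike.congr_fun (hσω p hp).2 u) v
  have hσ_fderiv : ∀ p ∈ euclideanBall r, ∀ u v w,
      fderiv ℝ σ p u v w = fderiv ℝ (fun x => ω x v w) p u := fun p hp u v w => by
    have hnear : (fun x => ω x v w - omega0 v w) =ᶠ[𝓝 p] fun x => σ x v w :=
      ((isOpen_euclideanBall r).eventually_mem hp).mono fun x hx => (hσ_apply x hx v w).symm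
    rw [← fderiv_sub_const, hnear.fderiv_eq, fderiv_apply_apply (hσ.differentiable p)]
  have halt' : ∀ p ∈ euclideanBall r, ∀ u v, σ p u v = -σ p v u := fun p hp u v => by
    rw [hσ_apply p hp, hσ_apply p hp, halt p (hσω p hp).1, omega0_antisymm]
    ring
  have hlag' : ∀ p ∈ euclideanBall r, σ p (X01L p) (X02L p) = 0 := fun p hp => by
    rw [hσ_apply p hp, X01L_apply, X02L_apply, hlag p (hσω p hp).1, omega0_X01_X02, sub_zero]
  have hdisc' : ∀ p ∈ euclideanBall r, ∫ ζ in Metric.closedBall (0 : ℂ) 1,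
      σ (ζ.re • p + ζ.im • X02L p) p (X02L p) = 0 := fun p hp => by
    rw [← hdisc p (hσω p hp).1]
    refine setIntegral_congr_fun measurableSet_closedBall fun ζ hζ => ?_
    rw [← discMap_eq, X02L_apply]
    exact hσ_apply _ (discMap_mem_euclideanBall hp (mem_closedBall_zero_iff.1 hζ)) p (Jmul p)
  obtain ⟨η, hη, hηS⟩ := exists_isFlat_primitive isIdempotentElem_positionProj X02L_mul_self
    commute_X02L_X01L (isOpen_euclideanBall r) (starConvex_euclideanBall r)
    (fun p hp => rot_mem_euclideanBall hp) hσ halt'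
    (fun p hp u v w => by simpa only [hσ_fderiv p hp] using hclosed p (hσω p hp).1 u v w)
    hlag' hdisc'
  exact ⟨η, euclideanBall r, hη, isOpen_euclideanBall r, zero_mem_euclideanBall hr,
    fun p hp => ⟨(hηS p hp).1, (hηS p hp).2.1,
      fun u v => ((hηS p hp).2.2 u v).trans (hσ_apply p hp u v)⟩⟩

end FocusFocus

theorem darboux_lemma_focus_focus_foliation_general
    (ω : E4 → E4 →L[ℝ] E4 →L[ℝ] ℝ) (U : Set E4) (hU : IsOpen U) (hU0 : (0 : E4) ∈ U)
    (hω : ContDiffOn ℝ (⊤ : ℕ∞) ω U) (halt : ∀ p ∈ U, ∀ u v : E4, ω p u v = -(ω p v u))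
    (hclosed : ∀ p ∈ U, ∀ u v w : E4, fderiv ℝ (fun x => ω x v w) p u +
      fderiv ℝ (fun x => ω x w u) p v + fderiv ℝ (fun x => ω x u v) p w = 0)
    (hflat : ∀ u v : E4, flatAt (fun p => ω p u v - omega0 u v) 0)
    (hlag : ∀ p ∈ U, ω p (X01 p) (X02 p) = 0)
    (hdisc : ∀ p ∈ U, ∫ ζ in Metric.closedBall (0 : ℂ) 1,
      (ω (discMap p ζ) p (Jmul p) - omega0 p (Jmul p)) = 0) :
    ∃ (Φ : E4 → E4) (V : Set E4), IsOpen V ∧ 0 ∈ V ∧ ContDiffOn ℝ (⊤ : ℕ∞) Φ V ∧ InjOn Φ V ∧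
      flatAt (fun p => Φ p - p) 0 ∧
      (∀ p ∈ V, ∀ u v, ω (Φ p) (fderiv ℝ Φ p u) (fderiv ℝ Φ p v) = omega0 u v) ∧
      ∀ p ∈ V, qmap (Φ p) = qmap p := by
  obtain ⟨η, S, hη, hS, hS0, hηS⟩ :=
    exists_isFlat_extDerivOne_eq_sub_omega0 hU hU0 hω halt hclosed hflat hlag hdisc
  obtain ⟨a, b, ha, hb, hab⟩ := exists_isFlat_coeff_of_apply_eq_zero hη
    fun p hp => ⟨(hηS p hp).1, (hηS p hp).2.1⟩
  obtain ⟨Φ, V, hV, hV0, hΦ, hinj, hΦflat, hΦV⟩ := exists_rightInverse_of_isFlat_sub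
    (isFlat_flowShear_sub (A := X01L) (B := X02L) ha hb) hS hS0
  refine ⟨Φ, V, hV, hV0, hΦ, hinj, hΦflat, fun p hp u v => ?_, fun p hp => ?_⟩
  · obtain ⟨hΦS, -, hinv⟩ := hΦV p hp
    have hpull := apply_fderiv_flowShear_eq_add_extDerivOne omega0_antisymm omega0L_X01L
      omega0L_X02L commute_X02L_X01L.symm ha.differentiable hb.differentiable hS hab hΦS
      (fderiv ℝ Φ p u) (fderiv ℝ Φ p v)
    rw [hinv, hinv, (hηS _ hΦS).2.2, omega0L_apply, omega0L_apply, add_sub_cancel] at hpull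
    exact hpull.symm
  · have hq₁ := apply_flowShear (a := a) (b := b) (.refl X01L) commute_X02L_X01L omega0L_X01L
      omega0L_X02L (Φ p)
    have hq₂ := apply_flowShear (a := a) (b := b) commute_X02L_X01L.symm (.refl X02L) omega0L_X01L
      omega0L_X02L (Φ p)
    rw [(hΦV p hp).2.1] at hq₁ hq₂
    simp only [qmap, q1_eq, q2_eq, hq₁, hq₂]

/-- **A Darboux lemma for focus-focus foliations.**
Let `ω` be a symplectic form near `0 ∈ ℝ⁴` such that (a) `ω − ω₀` is flat at the
origin, (b) the level sets of `q` are Lagrangian for `ω`, and (c) the integral of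
`ω − ω₀` over each disc `D_z = {(ζz₁, ζz₂) : |ζ| ≤ 1}` vanishes.  Then there are
local diffeomorphisms `Φ` of `(ℝ⁴,0)` and `U = (U₁,U₂)` of `(ℝ²,0)`, both infinitely
tangent to the identity, with `Φ*ω = ω₀` and `q∘Φ = U∘q` near the origin. -/
theorem darboux_lemma_focus_focus_foliation
    (ω : E4 → (E4 →L[ℝ] E4 →L[ℝ] ℝ)) (U : Set E4)
    (hUopen : IsOpen U) (hU0 : (0:E4) ∈ U)
    (hsm : ContDiffOn ℝ (⊤ : ℕ∞) ω U)
    (halt : ∀ p ∈ U, ∀ u v : E4, ω p u v = -(ω p v u))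
    (hnondeg : ∀ p ∈ U, ∀ u : E4, (∀ v : E4, ω p u v = 0) → u = 0)
    (hclosed : ∀ p ∈ U, ∀ u v w : E4,
      fderiv ℝ (fun x => ω x v w) p u + fderiv ℝ (fun x => ω x w u) p v +
        fderiv ℝ (fun x => ω x u v) p w = 0)
    -- (a) `ω = ω₀ + O(∞)`
    (hflat : ∀ u v : E4, flatAt (fun p => ω p u v - omega0 u v) 0)
    -- (b) the regular level sets of `q` are Lagrangian for `ω`
    (hlag : ∀ p ∈ U, ω p (X01 p) (X02 p) = 0)
    -- (c) `∫_{D_z} (ω − ω₀) = 0`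
    (hdisc : ∀ p ∈ U,
      (∫ ζ in Metric.closedBall (0:ℂ) 1,
        (ω (discMap p ζ) p (Jmul p) - omega0 p (Jmul p))) = 0) :
    ∃ (Φ : E4 → E4) (U12 : E2 → E2) (V : Set E4) (W : Set E2),
      IsOpen V ∧ (0:E4) ∈ V ∧ ContDiffOn ℝ (⊤ : ℕ∞) Φ V ∧ Set.InjOn Φ V ∧
      IsOpen W ∧ (0:E2) ∈ W ∧ ContDiffOn ℝ (⊤ : ℕ∞) U12 W ∧ Set.InjOn U12 W ∧
      flatAt (fun p : E4 => Φ p - p) 0 ∧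
      flatAt (fun c : E2 => U12 c - c) 0 ∧
      (∀ p ∈ V, ∀ u v : E4,
        ω (Φ p) (fderiv ℝ Φ p u) (fderiv ℝ Φ p v) = omega0 u v) ∧
      (∀ p ∈ V, qmap (Φ p) = U12 (qmap p)) := by
  obtain ⟨Φ, V, hV, hV0, hΦ, hinj, hΦflat, hpullback, hqmap⟩ :=
    darboux_lemma_focus_focus_foliation_general ω U hUopen hU0 hsm halt hclosed hflat hlag hdisc
  exact ⟨Φ, id, V, univ, hV, hV0, hΦ, hinj, isOpen_univ, mem_univ _, contDiffOn_id, injOn_id _,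
    hΦflat, by simpa using flatAt_zero, hpullback, hqmap⟩
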